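/- Let X be a Peano space and T a maximal cyclic subset of X. If C is a connected component of X \ T, then the boundary of C consists of exactly one point, and that point lies in T. -/

import Mathlib

open Metric Set

/-- A Jordan curve: a subset homeomorphic to the circle. -/
def IsJordanCurve {X : Type} [TopologicalSpace X] (J : Set X) : Prop :=
  Nonempty (AddCircle (1 : ℝ) ≃ₜ J)

/-- A set is cyclicly connected if every pair of its points lies on a Jordan curve in it. -/
def CyclicallyConnected {X : Type} [TopologicalSpace X] (C : Set X) : Prop :=
  ∀ x ∈ C, ∀ y ∈ C, ∃ J : Set X, J ⊆ C ∧ IsJordanCurve J ∧ x ∈ J ∧ y ∈ J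

/-- A maximal cyclic subset: non-degenerate, cyclicly connected, and not a proper subset
of any cyclicly connected subset. -/
def MaximalCyclic {X : Type} [TopologicalSpace X] (T : Set X) : Prop :=
  ¬ T.Subsingleton ∧ CyclicallyConnected T ∧
    ∀ C : Set X, CyclicallyConnected C → T ⊆ C → C = T

/-- `IsArc a b α`: the set `α` is an arc with end points `a` and `b`. -/
def IsArc {X : Type*} [TopologicalSpace X] (a b : X) (α : Set X) : Prop :=
  ∃ (f : ℝ → X) (u v : ℝ), u < v ∧ ContinuousOn f (Icc u v) ∧ InjOn f (Icc u v) ∧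
    f u = a ∧ f v = b ∧ f '' Icc u v = α

namespace IsArc

variable {X : Type*} [TopologicalSpace X] {a b c : X} {α β S : Set X}

lemma exists_param (h : IsArc a b α) {u v : ℝ} (huv : u < v) :
    ∃ f : ℝ → X, ContinuousOn f (Icc u v) ∧ InjOn f (Icc u v) ∧ f u = a ∧ f v = b ∧
      f '' Icc u v = α := by
  obtain ⟨f, p, q, hpq, hc, hi, rfl, rfl, rfl⟩ := h
  have hk : 0 < (q - p) / (v - u) := div_pos (by linarith) (by linarith)
  set k := (q - p) / (v - u) with hkdef
  have hkv : k * (v - u) = q - p := div_mul_cancel₀ _ (by linarith)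
  have himg : (fun t => p + k * (t - u)) '' Icc u v = Icc p q := by
    ext y
    constructor
    · rintro ⟨t, ⟨h1, h2⟩, rfl⟩
      constructor <;> dsimp only <;> nlinarith
    · rintro ⟨h1, h2⟩
      refine ⟨u + (y - p) / k, ⟨?_, ?_⟩, ?_⟩
      · have := div_nonneg (sub_nonneg.2 h1) hk.le
        linarith
      · have : (y - p) / k ≤ v - u := by
          rw [div_le_iff₀ hk]; linarith
        linarith
      · dsimp only
        field_simp
        ring
  refine ⟨fun t => f (p + k * (t - u)), ?_, ?_, by simp, ?_, ?_⟩
  · refine hc.comp (by fun_prop) ?_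
    rw [← himg]
    exact mapsTo_image _ _
  · intro s hs t ht hst
    have := hi (himg ▸ mem_image_of_mem _ hs) (himg ▸ mem_image_of_mem _ ht) hst
    have h2 : k * (s - t) = 0 := by linarith
    rcases mul_eq_zero.1 h2 with h3 | h3 <;> linarith
  · dsimp only
    rw [hkv]; congr 1; ring
  · rw [← himg, image_image]

lemma symm (h : IsArc a b α) : IsArc b a α := by
  obtain ⟨f, p, q, hpq, hc, hi, rfl, rfl, rfl⟩ := h
  have himg : (fun t : ℝ => -t) '' Icc (-q) (-p) = Icc p q := by simp
  refine ⟨fun t => f (-t), -q, -p, by linarith, ?_, ?_, by simp, by simp, ?_⟩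
  · refine hc.comp (by fun_prop) ?_
    rw [← himg]
    exact mapsTo_image _ _
  · intro s hs t ht hst
    have := hi (himg ▸ mem_image_of_mem _ hs) (himg ▸ mem_image_of_mem _ ht) hst
    linarith
  · rw [← himg, image_image]

lemma left_mem (h : IsArc a b α) : a ∈ α := by
  obtain ⟨f, p, q, hpq, hc, hi, rfl, rfl, rfl⟩ := h
  exact mem_image_of_mem _ ⟨le_rfl, hpq.le⟩

lemma right_mem (h : IsArc a b α) : b ∈ α := h.symm.left_mem

lemma ne (h : IsArc a b α) : a ≠ b := by
  obtain ⟨f, p, q, hpq, hc, hi, rfl, rfl, rfl⟩ := h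
  exact fun h => hpq.ne (hi ⟨le_rfl, hpq.le⟩ ⟨hpq.le, le_rfl⟩ h)

lemma isCompact (h : IsArc a b α) : IsCompact α := by
  obtain ⟨f, p, q, hpq, hc, hi, rfl, rfl, rfl⟩ := h
  exact isCompact_Icc.image_of_continuousOn hc

lemma isPreconnected (h : IsArc a b α) : IsPreconnected α := by
  obtain ⟨f, p, q, hpq, hc, hi, rfl, rfl, rfl⟩ := h
  exact isPreconnected_Icc.image _ hc

lemma joinedIn (h : IsArc a b α) : JoinedIn α a b := by
  obtain ⟨f, hc, hi, rfl, rfl, rfl⟩ := h.exists_param zero_lt_one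
  exact JoinedIn.ofLine hc rfl rfl subset_rfl

/-- A sub-arc of a parametrised arc. -/
lemma of_param {f : ℝ → X} {p q u v : ℝ} (hc : ContinuousOn f (Icc p q))
    (hi : InjOn f (Icc p q)) (hpu : p ≤ u) (huv : u < v) (hvq : v ≤ q) :
    IsArc (f u) (f v) (f '' Icc u v) :=
  ⟨f, u, v, huv, hc.mono (Icc_subset_Icc hpu hvq), hi.mono (Icc_subset_Icc hpu hvq), rfl, rfl, rfl⟩

lemma split (h : IsArc a b α) (hcα : c ∈ α) (hca : c ≠ a) (hcb : c ≠ b) :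
    ∃ α₁ α₂, IsArc a c α₁ ∧ IsArc c b α₂ ∧ α₁ ∪ α₂ = α ∧ α₁ ∩ α₂ = {c} := by
  obtain ⟨f, p, q, hpq, hc, hi, rfl, rfl, rfl⟩ := h
  obtain ⟨s, ⟨h1, h2⟩, rfl⟩ := hcα
  have h1' : p < s := lt_of_le_of_ne h1 (by rintro rfl; exact hca rfl)
  have h2' : s < q := lt_of_le_of_ne h2 (by rintro rfl; exact hcb rfl)
  refine ⟨f '' Icc p s, f '' Icc s q, of_param hc hi le_rfl h1' h2, of_param hc hi h1 h2' le_rfl,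
    ?_, ?_⟩
  · rw [← image_union, Icc_union_Icc_eq_Icc h1 h2]
  · rw [← hi.image_inter (Icc_subset_Icc le_rfl h2) (Icc_subset_Icc h1 le_rfl),
      Icc_inter_Icc_eq_singleton h1 h2, image_singleton]

lemma trans (h : IsArc a b α) (h' : IsArc b c β) (hαβ : α ∩ β ⊆ {b}) : IsArc a c (α ∪ β) := by
  obtain ⟨f, hfc, hfi, rfl, hf1, rfl⟩ := h.exists_param zero_lt_one
  obtain ⟨g, hgc, hgi, hg1, rfl, rfl⟩ := h'.exists_param one_lt_two
  have hEq1 : EqOn (fun t : ℝ => if t ≤ 1 then f t else g t) f (Icc 0 1) := fun t ht => by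
    simp [ht.2]
  have hEq2 : EqOn (fun t : ℝ => if t ≤ 1 then f t else g t) g (Icc 1 2) := fun t ht => by
    rcases ht.1.eq_or_lt with rfl | h
    · simp [hf1, hg1]
    · simp [h.not_ge]
  have hU : Icc (0 : ℝ) 2 = Icc 0 1 ∪ Icc 1 2 :=
    (Icc_union_Icc_eq_Icc zero_le_one one_le_two).symm
  have key : ∀ s ∈ Icc (0 : ℝ) 1, ∀ t ∈ Icc (1 : ℝ) 2, f s = g t → s = t := by
    intro s hs t ht hst
    have hb : f s ∈ ({b} : Set X) := hαβ ⟨mem_image_of_mem _ hs, hst ▸ mem_image_of_mem _ ht⟩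
    have e1 : s = 1 := hfi hs ⟨zero_le_one, le_rfl⟩ (hf1 ▸ hb)
    have e2 : t = 1 := hgi ht ⟨le_rfl, one_le_two⟩ (by rw [← hst, hg1]; exact hb)
    rw [e1, e2]
  refine ⟨fun t => if t ≤ 1 then f t else g t, 0, 2, two_pos, ?_, ?_, by simp, by simp, ?_⟩
  · rw [hU]
    exact (hfc.congr hEq1).union_of_isClosed (hgc.congr hEq2) isClosed_Icc isClosed_Icc
  · intro s hs t ht hst
    rw [hU] at hs ht
    rcases hs with hs | hs <;> rcases ht with ht | ht
    · rw [hEq1 hs, hEq1 ht] at hst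
      exact hfi hs ht hst
    · rw [hEq1 hs, hEq2 ht] at hst
      exact key s hs t ht hst
    · rw [hEq2 hs, hEq1 ht] at hst
      exact (key t ht s hs hst.symm).symm
    · rw [hEq2 hs, hEq2 ht] at hst
      exact hgi hs ht hst
  · rw [hU, image_union, hEq1.image_eq, hEq2.image_eq]

/-- Following an arc from its first end point up to the first hit of a closed set. -/
lemma exists_first_hit (h : IsArc a b α) (hS : IsClosed S) (hαS : (α ∩ S).Nonempty)
    (ha : a ∉ S) : ∃ c ∈ S, ∃ β ⊆ α, IsArc a c β ∧ β ∩ S = {c} := by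
  obtain ⟨f, p, q, hpq, hc, hi, rfl, rfl, rfl⟩ := h
  have hcl : IsClosed (Icc p q ∩ f ⁻¹' S) := hc.preimage_isClosed_of_isClosed isClosed_Icc hS
  have hcp : IsCompact (Icc p q ∩ f ⁻¹' S) :=
    isCompact_Icc.of_isClosed_subset hcl inter_subset_left
  obtain ⟨_, ⟨s, hs, rfl⟩, hsS⟩ := hαS
  obtain ⟨m, ⟨hm, hmS⟩, hmin⟩ := hcp.exists_isLeast ⟨s, hs, hsS⟩
  have hpm : p < m := lt_of_le_of_ne hm.1 (by rintro rfl; exact ha hmS)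
  refine ⟨f m, hmS, f '' Icc p m, image_mono (Icc_subset_Icc le_rfl hm.2),
    of_param hc hi le_rfl hpm hm.2, Subset.antisymm ?_ ?_⟩
  · rintro _ ⟨⟨t, ht, rfl⟩, htS⟩
    have := hmin ⟨⟨ht.1, ht.2.trans hm.2⟩, htS⟩
    rw [le_antisymm ht.2 this]; rfl
  · rintro _ rfl
    exact ⟨mem_image_of_mem _ ⟨hpm.le, le_rfl⟩, hmS⟩

/-- From a point of an arc off a closed set one can follow the arc in both directions until it
meets the closed set. -/
lemma exists_crosscut {y : X} (h : IsArc a y α) (h' : IsArc y b β) (hαβ : α ∩ β ⊆ {y})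
    (hS : IsClosed S) (hαS : (α ∩ S).Nonempty) (hβS : (β ∩ S).Nonempty) (hy : y ∉ S) :
    ∃ r ∈ S, ∃ s ∈ S, r ≠ s ∧ r ∈ α ∧ s ∈ β ∧
      ∃ γ ⊆ α ∪ β, y ∈ γ ∧ IsArc r s γ ∧ γ ∩ S = {r, s} := by
  obtain ⟨r, hr, α', hα', har, hαr⟩ := h.symm.exists_first_hit hS hαS hy
  obtain ⟨s, hs, β', hβ', hbs, hβs⟩ := h'.exists_first_hit hS hβS hy
  refine ⟨r, hr, s, hs, ?_, hα' har.right_mem, hβ' hbs.right_mem, α' ∪ β',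
    union_subset_union hα' hβ', Or.inl har.left_mem,
    har.symm.trans hbs ((inter_subset_inter hα' hβ').trans hαβ), ?_⟩
  · rintro rfl
    exact hy (hαβ ⟨hα' har.right_mem, hβ' hbs.right_mem⟩ ▸ hr)
  · rw [union_inter_distrib_right, hαr, hβs]; rfl

end IsArc

namespace IsJordanCurve

variable {X : Type} [TopologicalSpace X] {J : Set X} {a b : X}

lemma isCompact (hJ : IsJordanCurve J) : IsCompact J := by
  obtain ⟨e⟩ := hJ
  have : Fact ((0 : ℝ) < 1) := ⟨one_pos⟩
  have : CompactSpace J := e.compactSpace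
  exact isCompact_iff_compactSpace.2 this

lemma exists_arcs (hJ : IsJordanCurve J) (ha : a ∈ J) (hb : b ∈ J) (hab : a ≠ b) :
    ∃ α β, IsArc a b α ∧ IsArc a b β ∧ α ∪ β = J ∧ α ∩ β = {a, b} := by
  obtain ⟨e⟩ := hJ
  have : Fact ((0 : ℝ) < 1) := ⟨one_pos⟩
  set θ := e.symm ⟨a, ha⟩ with hθ
  set g : ℝ → X := fun t => e ((t : AddCircle (1 : ℝ)) + θ) with hg
  have hgc : Continuous g := by
    have : Continuous fun t : ℝ => (t : AddCircle (1 : ℝ)) := AddCircle.continuous_mk' 1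
    fun_prop
  have hg0 : g 0 = a := by simp [hg, hθ]
  have hg1 : g 1 = a := by
    have : ((1 : ℝ) : AddCircle (1 : ℝ)) = 0 := AddCircle.coe_period 1
    simp [hg, hθ, this]
  have hinj : InjOn g (Ico 0 1) := by
    intro s hs t ht hst
    have h1 := e.injective (Subtype.ext hst)
    have h2 : (s : AddCircle (1 : ℝ)) = t := add_right_cancel h1
    exact (AddCircle.coe_eq_coe_iff_of_mem_Ico (p := (1 : ℝ)) (a := 0)
      (by simpa using hs) (by simpa using ht)).1 h2
  have hsurj : ∀ y ∈ J, ∃ t ∈ Ico (0 : ℝ) 1, g t = y := by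
    intro y hy
    have : e.symm ⟨y, hy⟩ - θ ∈ (fun t : ℝ => (t : AddCircle (1 : ℝ))) '' Ico 0 (0 + 1) := by
      rw [AddCircle.coe_image_Ico_eq]; trivial
    obtain ⟨t, ht, hty⟩ := this
    refine ⟨t, by simpa using ht, ?_⟩
    dsimp only at hty
    simp [hg, hty]
  have hmem : ∀ t, g t ∈ J := fun t => (e _).2
  obtain ⟨s, hs, rfl⟩ := hsurj b hb
  have hs0 : 0 < s := lt_of_le_of_ne hs.1 (by rintro rfl; exact hab hg0.symm)
  have hinj' : InjOn g (Icc s 1) := by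
    intro x hx y hy hxy
    rcases hx.2.eq_or_lt with rfl | hx1 <;> rcases hy.2.eq_or_lt with rfl | hy1
    · rfl
    · rw [hg1, ← hg0] at hxy
      have := hinj ⟨le_rfl, one_pos⟩ ⟨hs.1.trans hy.1, hy1⟩ hxy
      linarith [hy.1]
    · rw [hg1, ← hg0] at hxy
      have := hinj ⟨hs.1.trans hx.1, hx1⟩ ⟨le_rfl, one_pos⟩ hxy
      linarith [hx.1]
    · exact hinj ⟨hs.1.trans hx.1, hx1⟩ ⟨hs.1.trans hy.1, hy1⟩ hxy
  refine ⟨g '' Icc 0 s, g '' Icc s 1, ?_, ?_, Subset.antisymm ?_ ?_, Subset.antisymm ?_ ?_⟩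
  · exact ⟨g, 0, s, hs0, hgc.continuousOn, hinj.mono (Icc_subset_Ico_right hs.2),
      hg0, rfl, rfl⟩
  · exact IsArc.symm ⟨g, s, 1, hs.2, hgc.continuousOn, hinj', rfl, hg1, rfl⟩
  · rintro _ (⟨t, -, rfl⟩ | ⟨t, -, rfl⟩) <;> exact hmem t
  · intro y hy
    obtain ⟨t, ht, rfl⟩ := hsurj y hy
    rcases le_total t s with h | h
    · exact Or.inl ⟨t, ⟨ht.1, h⟩, rfl⟩
    · exact Or.inr ⟨t, ⟨h, ht.2.le⟩, rfl⟩
  · rintro _ ⟨⟨t, ht, rfl⟩, ⟨r, hr, hrt⟩⟩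
    rcases hr.2.eq_or_lt with rfl | hr1
    · left; rw [← hrt, hg1]
    · have := hinj ⟨hs.1.trans hr.1, hr1⟩ ⟨ht.1, ht.2.trans_lt hs.2⟩ hrt
      subst this
      right; rw [le_antisymm ht.2 hr.1]; rfl
  · rintro _ (rfl | rfl)
    · exact ⟨⟨0, ⟨le_rfl, hs.1⟩, hg0⟩, ⟨1, ⟨hs.2.le, le_rfl⟩, hg1⟩⟩
    · exact ⟨⟨s, ⟨hs.1, le_rfl⟩, rfl⟩, ⟨s, ⟨le_rfl, hs.2.le⟩, rfl⟩⟩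

lemma exists_arc_through {y : X} (hJ : IsJordanCurve J) (ha : a ∈ J) (hb : b ∈ J) (hab : a ≠ b)
    (hy : y ∈ J) : ∃ α ⊆ J, IsArc a b α ∧ y ∈ α := by
  obtain ⟨α, β, hα, hβ, hU, -⟩ := hJ.exists_arcs ha hb hab
  rcases hU.symm ▸ hy with h | h
  · exact ⟨α, hU ▸ subset_union_left, hα, h⟩
  · exact ⟨β, hU ▸ subset_union_right, hβ, h⟩

lemma exists_arc_avoiding {y : X} (hJ : IsJordanCurve J) (ha : a ∈ J) (hb : b ∈ J) (hab : a ≠ b)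
    (hya : y ≠ a) (hyb : y ≠ b) : ∃ α ⊆ J, IsArc a b α ∧ y ∉ α := by
  obtain ⟨α, β, hα, hβ, hU, hI⟩ := hJ.exists_arcs ha hb hab
  by_cases hy : y ∈ α
  · refine ⟨β, hU ▸ subset_union_right, hβ, fun h => ?_⟩
    have : y ∈ ({a, b} : Set X) := hI ▸ ⟨hy, h⟩
    rcases this with h | h
    exacts [hya h, hyb h]
  · exact ⟨α, hU ▸ subset_union_left, hα, hy⟩

end IsJordanCurve

lemma IsArc.isJordanCurve_union {X : Type} [TopologicalSpace X] [T2Space X] {a b : X}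
    {α β : Set X} (hα : IsArc a b α) (hβ : IsArc a b β) (hI : α ∩ β ⊆ {a, b}) :
    IsJordanCurve (α ∪ β) := by
  obtain ⟨f, hfc, hfi, hf0, hf1, rfl⟩ := hα.exists_param (show (0 : ℝ) < 1 / 2 by norm_num)
  obtain ⟨g, hgc, hgi, hg0, hg1, rfl⟩ := hβ.symm.exists_param (show (1 / 2 : ℝ) < 1 by norm_num)
  have : Fact ((0 : ℝ) < 1) := ⟨one_pos⟩
  set F : ℝ → X := fun t => if t ≤ 1 / 2 then f t else g t with hF
  have hEq1 : EqOn F f (Icc 0 (1 / 2)) := fun t ht => by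
    simp only [hF, if_pos ht.2]
  have hEq2 : EqOn F g (Icc (1 / 2) 1) := fun t ht => by
    rcases ht.1.eq_or_lt with rfl | h
    · simp only [hF, le_refl, if_true, hf1, hg0]
    · simp only [hF, if_neg h.not_ge]
  have hU : Icc (0 : ℝ) 1 = Icc 0 (1 / 2) ∪ Icc (1 / 2) 1 :=
    (Icc_union_Icc_eq_Icc (by norm_num) (by norm_num)).symm
  have hFc : ContinuousOn F (Icc 0 1) := by
    rw [hU]
    exact (hfc.congr hEq1).union_of_isClosed (hgc.congr hEq2) isClosed_Icc isClosed_Icc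
  have hab := hα.ne
  have key : ∀ s ∈ Icc (0 : ℝ) (1 / 2), ∀ t ∈ Icc (1 / 2 : ℝ) 1, t < 1 → f s = g t → s = t := by
    intro s hs t ht ht1 hst
    rcases hI ⟨mem_image_of_mem _ hs, hst ▸ mem_image_of_mem _ ht⟩ with h | h
    · have := hgi ht ⟨by norm_num, le_rfl⟩ (by rw [← hst, hg1, h])
      exact absurd this ht1.ne
    · have e1 := hgi ht ⟨le_rfl, by norm_num⟩ (by rw [← hst, hg0, h])
      have e2 := hfi hs ⟨by norm_num, le_rfl⟩ (by rw [hf1, h])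
      rw [e1, e2]
  have hinj : InjOn F (Ico 0 1) := by
    intro s hs t ht hst
    have hs' : s ∈ Icc (0 : ℝ) (1 / 2) ∨ s ∈ Icc (1 / 2 : ℝ) 1 :=
      (le_total s (1 / 2)).imp (fun h => ⟨hs.1, h⟩) (fun h => ⟨h, hs.2.le⟩)
    have ht' : t ∈ Icc (0 : ℝ) (1 / 2) ∨ t ∈ Icc (1 / 2 : ℝ) 1 :=
      (le_total t (1 / 2)).imp (fun h => ⟨ht.1, h⟩) (fun h => ⟨h, ht.2.le⟩)
    rcases hs' with hs' | hs' <;> rcases ht' with ht' | ht'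
    · rw [hEq1 hs', hEq1 ht'] at hst
      exact hfi hs' ht' hst
    · rw [hEq1 hs', hEq2 ht'] at hst
      exact key s hs' t ht' ht.2 hst
    · rw [hEq2 hs', hEq1 ht'] at hst
      exact (key t ht' s hs' hs.2 hst.symm).symm
    · rw [hEq2 hs', hEq2 ht'] at hst
      exact hgi hs' ht' hst
  have hF01 : F 0 = F (0 + 1) := by
    rw [zero_add, hEq1 ⟨le_rfl, by norm_num⟩, hEq2 ⟨by norm_num, le_rfl⟩, hf0, hg1]
  have hcont : Continuous (AddCircle.liftIco (1 : ℝ) 0 F) :=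
    AddCircle.liftIco_continuous hF01 (by simpa using hFc)
  have hcoe : ∀ x : AddCircle (1 : ℝ), ∃ t ∈ Ico (0 : ℝ) 1, (t : AddCircle (1 : ℝ)) = x := by
    intro x
    have : x ∈ (fun t : ℝ => (t : AddCircle (1 : ℝ))) '' Ico 0 (0 + 1) := by
      rw [AddCircle.coe_image_Ico_eq]; trivial
    simpa using this
  have happ : ∀ t ∈ Ico (0 : ℝ) 1, AddCircle.liftIco (1 : ℝ) 0 F (t : AddCircle (1 : ℝ)) = F t :=
    fun t ht => AddCircle.liftIco_coe_apply (by simpa using ht)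
  have hinj' : Function.Injective (AddCircle.liftIco (1 : ℝ) 0 F) := by
    intro x y hxy
    obtain ⟨s, hs, rfl⟩ := hcoe x
    obtain ⟨t, ht, rfl⟩ := hcoe y
    rw [happ s hs, happ t ht] at hxy
    rw [hinj hs ht hxy]
  have hrange : range (AddCircle.liftIco (1 : ℝ) 0 F) = f '' Icc 0 (1 / 2) ∪ g '' Icc (1 / 2) 1 := by
    rw [← hEq1.image_eq, ← hEq2.image_eq, ← image_union, ← hU]
    ext y
    constructor
    · rintro ⟨x, rfl⟩
      obtain ⟨s, hs, rfl⟩ := hcoe x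
      exact ⟨s, Ico_subset_Icc_self hs, (happ s hs).symm⟩
    · rintro ⟨t, ht, rfl⟩
      rcases ht.2.eq_or_lt with rfl | h
      · refine ⟨((0 : ℝ) : AddCircle (1 : ℝ)), ?_⟩
        rw [happ 0 ⟨le_rfl, one_pos⟩, hF01, zero_add]
      · exact ⟨t, happ t ⟨ht.1, h⟩⟩
  rw [← hrange]
  exact ⟨(hcont.isClosedEmbedding hinj').isEmbedding.toHomeomorph⟩

namespace CyclicallyConnected

variable {X : Type} [TopologicalSpace X] [T2Space X] {Z Z' J S : Set X} {p q y : X}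

/-- Any three distinct points of a cyclicly connected set lie, in any prescribed order, on an arc
in that set. -/
lemma exists_arc_through (hZ : CyclicallyConnected Z) (hp : p ∈ Z) (hq : q ∈ Z) (hy : y ∈ Z)
    (hpq : p ≠ q) (hyp : y ≠ p) (hyq : y ≠ q) :
    ∃ α β, α ⊆ Z ∧ β ⊆ Z ∧ IsArc p y α ∧ IsArc y q β ∧ α ∩ β ⊆ {y} := by
  obtain ⟨J, hJZ, hJ, hpJ, hyJ⟩ := hZ p hp y hy
  by_cases hqJ : q ∈ J
  · obtain ⟨α, hαJ, hα, hyα⟩ := hJ.exists_arc_through hpJ hqJ hpq hyJ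
    obtain ⟨α₁, α₂, h₁, h₂, hU, hI⟩ := hα.split hyα hyp hyq
    have hαZ := hαJ.trans hJZ
    rw [← hU] at hαZ
    exact ⟨α₁, α₂, subset_union_left.trans hαZ, subset_union_right.trans hαZ, h₁, h₂, hI.subset⟩
  have hcross : ∃ r ∈ J, r ≠ p ∧ ∃ κ ⊆ Z, IsArc q r κ ∧ κ ∩ J = {r} := by
    obtain ⟨K, hKZ, hK, hqK, hyK⟩ := hZ q hq y hy
    obtain ⟨κ₁, κ₂, h₁, h₂, hU, hI⟩ := hK.exists_arcs hqK hyK hyq.symm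
    have hJc := hJ.isCompact.isClosed
    obtain ⟨r₁, hr₁, μ₁, hμ₁, hqr₁, hi₁⟩ := h₁.exists_first_hit hJc ⟨y, h₁.right_mem, hyJ⟩ hqJ
    obtain ⟨r₂, hr₂, μ₂, hμ₂, hqr₂, hi₂⟩ := h₂.exists_first_hit hJc ⟨y, h₂.right_mem, hyJ⟩ hqJ
    rw [← hU] at hKZ
    by_cases hr : r₁ = p
    · refine ⟨r₂, hr₂, ?_, μ₂, hμ₂.trans (subset_union_right.trans hKZ), hqr₂, hi₂⟩
      rintro rfl
      have : r₁ ∈ ({q, y} : Set X) := hI ▸ ⟨hμ₁ hqr₁.right_mem, hr ▸ hμ₂ hqr₂.right_mem⟩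
      rcases this with h | h
      · exact hqJ (h ▸ hr₁)
      · exact hyp (h.symm.trans hr)
    · exact ⟨r₁, hr₁, hr, μ₁, hμ₁.trans (subset_union_left.trans hKZ), hqr₁, hi₁⟩
  obtain ⟨r, hrJ, hrp, κ, hκZ, hκ, hκJ⟩ := hcross
  have hκsub : ∀ {σ : Set X}, σ ⊆ J → σ ∩ κ ⊆ {r} := fun hσ z hz => hκJ ▸ ⟨hz.2, hσ hz.1⟩
  by_cases hry : r = y
  · subst hry
    obtain ⟨α, hαJ, hα, -⟩ := hJ.exists_arc_through hpJ hyJ hrp.symm hyJ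
    exact ⟨α, κ, hαJ.trans hJZ, hκZ, hα, hκ.symm, hκsub hαJ⟩
  · obtain ⟨α, hαJ, hα, hyα⟩ := hJ.exists_arc_through hpJ hrJ hrp.symm hyJ
    obtain ⟨α₁, α₂, h₁, h₂, hU, hI⟩ := hα.split hyα hyp (Ne.symm hry)
    have hα₁ : α₁ ⊆ J := (subset_union_left.trans hU.subset).trans hαJ
    have hα₂ : α₂ ⊆ J := (subset_union_right.trans hU.subset).trans hαJ
    refine ⟨α₁, α₂ ∪ κ, hα₁.trans hJZ, union_subset (hα₂.trans hJZ) hκZ, h₁,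
      h₂.trans hκ.symm (hκsub hα₂), ?_⟩
    rw [inter_union_distrib_left, hI]
    refine union_subset subset_rfl fun z hz => ?_
    have hzr : z = r := hκsub hα₁ hz
    exact hI ▸ ⟨hz.1, hzr ▸ h₂.right_mem⟩

/-- A crosscut of a Jordan curve, closed up by an arc of the curve through a given point. -/
lemma _root_.IsArc.exists_isJordanCurve_of_crosscut {r s : X} {γ : Set X} (hγ : IsArc r s γ)
    (hJ : IsJordanCurve J) (hγJ : γ ∩ J = {r, s}) (hy : y ∈ J) :
    ∃ J' ⊆ γ ∪ J, IsJordanCurve J' ∧ γ ⊆ J' ∧ y ∈ J' := by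
  have hr : r ∈ γ ∩ J := hγJ ▸ Or.inl rfl
  have hs : s ∈ γ ∩ J := hγJ ▸ Or.inr rfl
  obtain ⟨α, hαJ, hα, hyα⟩ := hJ.exists_arc_through hr.2 hs.2 hγ.ne hy
  exact ⟨γ ∪ α, union_subset_union_right _ hαJ,
    hγ.isJordanCurve_union hα ((inter_subset_inter_right _ hαJ).trans hγJ.subset),
    subset_union_left, Or.inr hyα⟩

lemma union_isJordanCurve (hZ : CyclicallyConnected Z) (hJ : IsJordanCurve J)
    (h : (Z ∩ J).Nontrivial) : CyclicallyConnected (Z ∪ J) := by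
  obtain ⟨a, ha, b, hb, hab⟩ := h
  have key : ∀ z ∈ Z, ∀ y ∈ J, ∃ J' ⊆ Z ∪ J, IsJordanCurve J' ∧ z ∈ J' ∧ y ∈ J' := by
    intro z hz y hy
    by_cases hzJ : z ∈ J
    · exact ⟨J, subset_union_right, hJ, hzJ, hy⟩
    obtain ⟨α, β, hαZ, hβZ, hα, hβ, hI⟩ := hZ.exists_arc_through ha.1 hb.1 hz hab
      (fun h => hzJ (h ▸ ha.2)) (fun h => hzJ (h ▸ hb.2))
    obtain ⟨r, hr, s, hs, hrs, -, -, γ, hγ, hzγ, hrsγ, hγJ⟩ :=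
      hα.exists_crosscut hβ hI hJ.isCompact.isClosed ⟨a, hα.left_mem, ha.2⟩
        ⟨b, hβ.right_mem, hb.2⟩ hzJ
    obtain ⟨J', hJ'sub, hJ', hγJ', hyJ'⟩ := hrsγ.exists_isJordanCurve_of_crosscut hJ hγJ hy
    exact ⟨J', hJ'sub.trans (union_subset_union_left _ (hγ.trans (union_subset hαZ hβZ))), hJ',
      hγJ' hzγ, hyJ'⟩
  rintro x (hx | hx) y (hy | hy)
  · obtain ⟨K, hK, h⟩ := hZ x hx y hy
    exact ⟨K, hK.trans subset_union_left, h⟩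
  · exact key x hx y hy
  · obtain ⟨K, h₁, h₂, h₃, h₄⟩ := key y hy x hx
    exact ⟨K, h₁, h₂, h₄, h₃⟩
  · exact ⟨J, subset_union_right, hJ, hx, hy⟩

lemma union (hZ : CyclicallyConnected Z) (hZ' : CyclicallyConnected Z')
    (h : (Z ∩ Z').Nontrivial) : CyclicallyConnected (Z ∪ Z') := by
  obtain ⟨a, ha, b, hb, hab⟩ := h
  have key : ∀ y ∈ Z, ∀ z ∈ Z', ∃ J ⊆ Z ∪ Z', IsJordanCurve J ∧ y ∈ J ∧ z ∈ J := by
    intro y hy z hz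
    obtain ⟨J, hJZ', hJ, haJ, hbJ⟩ := hZ' a ha.2 b hb.2
    have hW := hZ.union_isJordanCurve hJ ⟨a, ⟨ha.1, haJ⟩, b, ⟨hb.1, hbJ⟩, hab⟩
    by_cases hzJ : z ∈ J
    · obtain ⟨K, hK, h⟩ := hW y (Or.inl hy) z (Or.inr hzJ)
      exact ⟨K, hK.trans (union_subset_union_right _ hJZ'), h⟩
    obtain ⟨α, β, hαZ, hβZ, hα, hβ, hI⟩ := hZ'.exists_arc_through ha.2 hb.2 hz hab
      (fun h => hzJ (h ▸ haJ)) (fun h => hzJ (h ▸ hbJ))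
    obtain ⟨r, hr, s, hs, hrs, -, -, γ, hγ, hzγ, hrsγ, hγJ⟩ :=
      hα.exists_crosscut hβ hI hJ.isCompact.isClosed ⟨a, hα.left_mem, haJ⟩
        ⟨b, hβ.right_mem, hbJ⟩ hzJ
    obtain ⟨J', hJ'sub, hJ', hγJ', -⟩ := hrsγ.exists_isJordanCurve_of_crosscut hJ hγJ haJ
    have hW' := hW.union_isJordanCurve hJ'
      ⟨r, ⟨Or.inr hr, hγJ' hrsγ.left_mem⟩, s, ⟨Or.inr hs, hγJ' hrsγ.right_mem⟩, hrs⟩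
    obtain ⟨K, hK, h⟩ := hW' y (Or.inl (Or.inl hy)) z (Or.inr (hγJ' hzγ))
    have hJZ₂ : J' ⊆ Z' :=
      hJ'sub.trans (union_subset (hγ.trans (union_subset hαZ hβZ)) hJZ')
    exact ⟨K, hK.trans (union_subset (union_subset_union_right _ hJZ')
      (hJZ₂.trans subset_union_right)), h⟩
  rintro x (hx | hx) y (hy | hy)
  · obtain ⟨K, hK, h⟩ := hZ x hx y hy
    exact ⟨K, hK.trans subset_union_left, h⟩
  · exact key x hx y hy
  · obtain ⟨K, h₁, h₂, h₃, h₄⟩ := key y hy x hx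
    exact ⟨K, h₁, h₂, h₄, h₃⟩
  · obtain ⟨K, hK, h⟩ := hZ' x hx y hy
    exact ⟨K, hK.trans subset_union_right, h⟩

/-- Two points of a cyclicly connected set off a closed set `S` meeting it in at least two points
are joined to `S` by disjoint arcs. -/
lemma exists_disjoint_arcs (hZ : CyclicallyConnected Z) (hS : IsClosed S)
    (hZS : (Z ∩ S).Nontrivial) (hp : p ∈ Z) (hq : q ∈ Z) (hpS : p ∉ S) (hqS : q ∉ S)
    (hpq : p ≠ q) :
    ∃ p' ∈ S, ∃ q' ∈ S, ∃ α β, α ⊆ Z ∧ β ⊆ Z ∧ IsArc p p' α ∧ IsArc q q' β ∧ α ∩ S = {p'} ∧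
      β ∩ S = {q'} ∧ Disjoint α β := by
  obtain ⟨a, ha, b, hb, hab⟩ := hZS
  obtain ⟨α, β, hαZ, hβZ, hα, hβ, hI⟩ := hZ.exists_arc_through hp hq ha.1 hpq
    (fun h => hpS (h ▸ ha.2)) (fun h => hqS (h ▸ ha.2))
  obtain ⟨p', hp', α', hα', hpp', hαS⟩ := hα.exists_first_hit hS ⟨a, hα.right_mem, ha.2⟩ hpS
  obtain ⟨q', hq', β', hβ', hqq', hβS⟩ := hβ.symm.exists_first_hit hS ⟨a, hβ.left_mem, ha.2⟩ hqS
  have hI' : α' ∩ β' ⊆ {a} := (inter_subset_inter hα' hβ').trans hI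
  by_cases haa : a ∈ α' ∧ a ∈ β'
  swap
  · refine ⟨p', hp', q', hq', α', β', hα'.trans hαZ, hβ'.trans hβZ, hpp', hqq', hαS, hβS, ?_⟩
    rw [disjoint_iff_inter_eq_empty, eq_empty_iff_forall_notMem]
    intro z hz
    have : z = a := hI' hz
    subst this
    exact haa hz
  obtain rfl : a = p' := by
    have : a ∈ ({p'} : Set X) := hαS ▸ ⟨haa.1, ha.2⟩
    exact this
  obtain rfl : a = q' := by
    have : a ∈ ({q'} : Set X) := hβS ▸ ⟨haa.2, ha.2⟩
    exact this
  -- a detour from the doubly used point `a`, starting at the second point `b` of `S`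
  have key : ∀ {p q : X} {α β : Set X}, α ⊆ Z → β ⊆ Z → IsArc p a α → IsArc q a β →
      α ∩ S = {a} → β ∩ S = {a} → α ∩ β ⊆ {a} → ∀ {r j : X} {η : Set X}, IsArc r j η → η ⊆ Z →
      η ∩ (α ∪ β) = {r} → η ∩ S = {j} → r ∈ α → r ≠ a →
      ∃ p' ∈ S, ∃ q' ∈ S, ∃ α β, α ⊆ Z ∧ β ⊆ Z ∧ IsArc p p' α ∧ IsArc q q' β ∧ α ∩ S = {p'} ∧
      β ∩ S = {q'} ∧ Disjoint α β := by
    intro p q α β hαZ hβZ hα hβ hαS hβS hI r j η hη hηZ hηI hηS hrα hra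
    have hj : j ∈ η ∩ S := hηS ▸ rfl
    have hrS : r ∉ S := fun h => hra (by
      have : r ∈ ({a} : Set X) := hαS ▸ ⟨hrα, h⟩
      exact this)
    have hrβ : r ∉ β := fun h => hra (hI ⟨hrα, h⟩)
    have hηβ : Disjoint η β := by
      rw [disjoint_left]
      intro z hz hzβ
      have : z ∈ ({r} : Set X) := hηI ▸ ⟨hz, Or.inr hzβ⟩
      exact hrβ (this ▸ hzβ)
    by_cases hrp : r = p
    · subst hrp
      exact ⟨j, hj.2, a, ha.2, η, β, hηZ, hβZ, hη, hβ, hηS, hβS, hηβ⟩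
    obtain ⟨α₁, α₂, h₁, h₂, hU, hI₁₂⟩ := hα.split hrα hrp hra
    have hα₁ : α₁ ⊆ α := hU ▸ subset_union_left
    have haα₁ : a ∉ α₁ := fun h => hra (by
      have : a ∈ ({r} : Set X) := hI₁₂ ▸ ⟨h, h₂.right_mem⟩
      exact this.symm)
    refine ⟨j, hj.2, a, ha.2, α₁ ∪ η, β, union_subset (hα₁.trans hαZ) hηZ, hβZ,
      h₁.trans hη fun z hz => hηI ▸ ⟨hz.2, Or.inl (hα₁ hz.1)⟩, hβ, ?_, hβS, ?_⟩
    · rw [union_inter_distrib_right, hηS]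
      have : α₁ ∩ S = ∅ := by
        rw [eq_empty_iff_forall_notMem]
        intro z hz
        have : z ∈ ({a} : Set X) := hαS ▸ ⟨hα₁ hz.1, hz.2⟩
        exact haα₁ (this ▸ hz.1)
      rw [this, empty_union]
    · rw [disjoint_union_left]
      refine ⟨?_, hηβ⟩
      rw [disjoint_left]
      intro z hz hzβ
      have : z = a := hI ⟨hα₁ hz, hzβ⟩
      exact haα₁ (this ▸ hz)
  have hbR : b ∉ α' ∪ β' := by
    rintro (h | h)
    · have : b ∈ ({a} : Set X) := hαS ▸ ⟨h, hb.2⟩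
      exact hab this.symm
    · have : b ∈ ({a} : Set X) := hβS ▸ ⟨h, hb.2⟩
      exact hab this.symm
  obtain ⟨K, hKZ, hK, hbK, hpK⟩ := hZ b hb.1 p hp
  obtain ⟨η, hηK, hη, haη⟩ := hK.exists_arc_avoiding hbK hpK (fun h => hpS (h ▸ hb.2)) hab
    (fun h => hpS (h ▸ ha.2))
  obtain ⟨r, hr, η', hη', hbr, hη'I⟩ := hη.exists_first_hit
    (hpp'.isCompact.isClosed.union hqq'.isCompact.isClosed) ⟨p, hη.right_mem, Or.inl hpp'.left_mem⟩
    hbR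
  have hra : r ≠ a := fun h => haη (h ▸ hη' hbr.right_mem)
  have hrS : r ∉ S := by
    rintro h
    rcases hr with hr | hr
    · have : r ∈ ({a} : Set X) := hαS ▸ ⟨hr, h⟩
      exact hra this
    · have : r ∈ ({a} : Set X) := hβS ▸ ⟨hr, h⟩
      exact hra this
  obtain ⟨j, hj, η'', hη'', hrj, hη''S⟩ :=
    hbr.symm.exists_first_hit hS ⟨b, hbr.left_mem, hb.2⟩ hrS
  have hη''I : η'' ∩ (α' ∪ β') = {r} := by
    refine Subset.antisymm ((inter_subset_inter_left _ hη'').trans hη'I.subset) ?_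
    rintro _ rfl
    exact ⟨hrj.left_mem, hr⟩
  have hη''Z : η'' ⊆ Z := hη''.trans (hη'.trans (hηK.trans hKZ))
  rcases hr with hr | hr
  · exact key (hα'.trans hαZ) (hβ'.trans hβZ) hpp' hqq' hαS hβS hI' hrj hη''Z hη''I hη''S hr hra
  · obtain ⟨q', hq', p', hp', β, α, h₁, h₂, h₃, h₄, h₅, h₆, h₇⟩ :=
      key (hβ'.trans hβZ) (hα'.trans hαZ) hqq' hpp' hβS hαS (by rwa [inter_comm]) hrj hη''Z
        (by rwa [union_comm]) hη''S hr hra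
    exact ⟨p', hp', q', hq', α, β, h₂, h₁, h₄, h₃, h₆, h₅, h₇.symm⟩

end CyclicallyConnected

namespace MaximalCyclic

variable {X : Type} [TopologicalSpace X] [T2Space X] {T J α : Set X} {a b : X}

lemma subset_of_isJordanCurve (hT : MaximalCyclic T) (hJ : IsJordanCurve J)
    (h : (T ∩ J).Nontrivial) : J ⊆ T := by
  rw [← hT.2.2 _ (hT.2.1.union_isJordanCurve hJ h) subset_union_left]
  exact subset_union_right

/-- A maximal cyclic set contains every arc whose end points it contains. -/
lemma subset_of_isArc (hT : MaximalCyclic T) (hα : IsArc a b α) (ha : a ∈ T) (hb : b ∈ T) :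
    α ⊆ T := by
  intro y hy
  obtain ⟨J, hJT, hJ, haJ, hbJ⟩ := hT.2.1 a ha b hb
  by_contra hyT
  have hyJ : y ∉ J := fun h => hyT (hJT h)
  obtain ⟨α₁, α₂, h₁, h₂, hU, hI⟩ :=
    hα.split hy (fun h => hyT (h ▸ ha)) (fun h => hyT (h ▸ hb))
  obtain ⟨r, hr, s, hs, hrs, -, -, γ, -, hyγ, hγ, hγJ⟩ :=
    h₁.exists_crosscut h₂ hI.subset hJ.isCompact.isClosed ⟨a, h₁.left_mem, haJ⟩
      ⟨b, h₂.right_mem, hbJ⟩ hyJ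
  obtain ⟨J', -, hJ', hγJ', -⟩ := hγ.exists_isJordanCurve_of_crosscut hJ hγJ haJ
  exact hyT (hT.subset_of_isJordanCurve hJ'
    ⟨r, ⟨hJT hr, hγJ' hγ.left_mem⟩, s, ⟨hJT hs, hγJ' hγ.right_mem⟩, hrs⟩ (hγJ' hyγ))

end MaximalCyclic

section PathToArc

/-- `K` is a closed set of parameters along which the path `f` on `[0, 1]` can still be followed
continuously: `f` takes the same value at the two ends of every gap of `K`. -/
def IsShortcut {X : Type*} (f : ℝ → X) (K : Set ℝ) : Prop :=
  IsClosed K ∧ K ⊆ Icc 0 1 ∧ 0 ∈ K ∧ 1 ∈ K ∧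
    ∀ u ∈ K, ∀ v ∈ K, u < v → (∀ r ∈ K, r ∉ Ioo u v) → f u = f v

lemma IsShortcut.exists_bracket {X : Type*} {f : ℝ → X} {K : Set ℝ} (hK : IsShortcut f K) {m : ℝ}
    (hm : m ∈ Icc (0 : ℝ) 1) :
    ∃ u ∈ K, ∃ v ∈ K, u ≤ m ∧ m ≤ v ∧ f u = f v ∧ (∀ r ∈ K, r ≤ m → r ≤ u) ∧
      ∀ r ∈ K, m ≤ r → v ≤ r := by
  obtain ⟨hcl, hsub, h0, h1, hgap⟩ := hK
  have hcp : IsCompact K := isCompact_Icc.of_isClosed_subset hcl hsub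
  obtain ⟨u, ⟨huK, hum⟩, hu⟩ := (hcp.inter_right (isClosed_Iic (a := m))).exists_isGreatest
    ⟨0, h0, hm.1⟩
  obtain ⟨v, ⟨hvK, hvm⟩, hv⟩ := (hcp.inter_right (isClosed_Ici (a := m))).exists_isLeast
    ⟨1, h1, hm.2⟩
  refine ⟨u, huK, v, hvK, hum, hvm, ?_, fun r hr hrm => hu ⟨hr, hrm⟩, fun r hr hrm => hv ⟨hr, hrm⟩⟩
  rcases (show u ≤ v from le_trans hum hvm).eq_or_lt with h | h
  · rw [h]
  · refine hgap u huK v hvK h fun r hr hruv => ?_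
    rcases le_total r m with hrm | hrm
    · exact absurd (hu ⟨hr, hrm⟩) (not_le.2 hruv.1)
    · exact absurd (hv ⟨hr, hrm⟩) (not_le.2 hruv.2)

lemma exists_minimal_isShortcut {X : Type*} [MetricSpace X] {f : ℝ → X}
    (hf : ContinuousOn f (Icc 0 1)) : ∃ K, Minimal (IsShortcut f) K := by
  have hbase : IsShortcut f (Icc 0 1) := by
    refine ⟨isClosed_Icc, subset_rfl, ⟨le_rfl, zero_le_one⟩, ⟨zero_le_one, le_rfl⟩, ?_⟩
    intro u hu v hv huv h
    exact absurd ⟨by linarith, by linarith⟩ (h ((u + v) / 2)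
      ⟨by linarith [hu.1, hv.1], by linarith [hu.2, hv.2]⟩)
  suffices h : ∀ c ⊆ {K | IsShortcut f K}, IsChain (· ⊆ ·) c → c.Nonempty →
      ∃ lb ∈ {K | IsShortcut f K}, ∀ s ∈ c, lb ⊆ s by
    obtain ⟨K, -, hK⟩ := zorn_superset_nonempty _ h _ hbase
    exact ⟨K, hK⟩
  intro c hc hchain hne
  refine ⟨⋂₀ c, ⟨isClosed_sInter fun K hK => (hc hK).1, ?_, fun K hK => (hc hK).2.2.1,
    fun K hK => (hc hK).2.2.2.1, ?_⟩, fun K hK => sInter_subset_of_mem hK⟩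
  · obtain ⟨K, hK⟩ := hne
    exact (sInter_subset_of_mem hK).trans (hc hK).2.1
  intro u hu v hv huv hgap
  obtain ⟨K₀, hK₀⟩ := hne
  have hu01 := (hc hK₀).2.1 (hu K₀ hK₀)
  have hv01 := (hc hK₀).2.1 (hv K₀ hK₀)
  refine eq_of_forall_dist_le fun ε hε => ?_
  obtain ⟨δ₁, hδ₁, h₁⟩ := Metric.continuousOn_iff.1 hf u hu01 (ε / 2) (half_pos hε)
  obtain ⟨δ₂, hδ₂, h₂⟩ := Metric.continuousOn_iff.1 hf v hv01 (ε / 2) (half_pos hε)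
  set η := min (min δ₁ δ₂) ((v - u) / 2) / 2 with hη
  have hm : 0 < min (min δ₁ δ₂) ((v - u) / 2) := lt_min (lt_min hδ₁ hδ₂) (by linarith)
  have hη0 : 0 < η := half_pos hm
  have hηm : η < min (min δ₁ δ₂) ((v - u) / 2) := half_lt_self hm
  have hηδ₁ : η < δ₁ := hηm.trans_le ((min_le_left _ _).trans (min_le_left _ _))
  have hηδ₂ : η < δ₂ := hηm.trans_le ((min_le_left _ _).trans (min_le_right _ _))
  have hηuv : η < (v - u) / 2 := hηm.trans_le (min_le_right _ _)
  have hex : ∃ K ∈ c, ∀ r ∈ K, r ∉ Icc (u + η) (v - η) := by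
    by_contra! hcon
    have : Nonempty c := ⟨⟨K₀, hK₀⟩⟩
    obtain ⟨r, hr⟩ := IsCompact.nonempty_iInter_of_directed_nonempty_isCompact_isClosed
      (fun K : c => (K : Set ℝ) ∩ Icc (u + η) (v - η))
      (fun K L => by
        rcases hchain.total K.2 L.2 with h | h
        · exact ⟨K, subset_rfl, inter_subset_inter_left _ h⟩
        · exact ⟨L, inter_subset_inter_left _ h, subset_rfl⟩)
      (fun K => hcon K K.2)
      (fun K => isCompact_Icc.inter_left (hc K.2).1)
      (fun K => (hc K.2).1.inter isClosed_Icc)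
    rw [mem_iInter] at hr
    have hrI := (hr ⟨K₀, hK₀⟩).2
    exact hgap r (fun K hK => (hr ⟨K, hK⟩).1) ⟨by linarith [hrI.1], by linarith [hrI.2]⟩
  obtain ⟨K, hKc, hK⟩ := hex
  obtain ⟨u', hu', v', hv', hu'm, hmv', hfe, hmax, hmin⟩ := (hc hKc).exists_bracket
    (m := (u + v) / 2) ⟨by linarith [hu01.1, hv01.1], by linarith [hu01.2, hv01.2]⟩
  have e1 := hmax u (hu K hKc) (by linarith)
  have e2 := hmin v (hv K hKc) (by linarith)
  have e3 : u' < u + η := by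
    by_contra! h
    exact hK u' hu' ⟨h, by linarith⟩
  have e4 : v - η < v' := by
    by_contra! h
    exact hK v' hv' ⟨by linarith, h⟩
  have d1 := h₁ u' ((hc hKc).2.1 hu') (by rw [Real.dist_eq, abs_lt]; constructor <;> linarith)
  have d2 := h₂ v' ((hc hKc).2.1 hv') (by rw [Real.dist_eq, abs_lt]; constructor <;> linarith)
  rw [hfe] at d1
  calc dist (f u) (f v) ≤ dist (f v') (f u) + dist (f v') (f v) := dist_triangle_left _ _ _
    _ ≤ ε := by linarith

lemma Minimal.notMem_Ioo_of_isShortcut {X : Type*} {f : ℝ → X} {K : Set ℝ}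
    (hK : Minimal (IsShortcut f) K) {s t : ℝ} (hs : s ∈ K) (ht : t ∈ K)
    (hf : f s = f t) : ∀ r ∈ K, r ∉ Ioo s t := by
  have hgood : IsShortcut f (K \ Ioo s t) := by
    obtain ⟨hcl, hsub, h0, h1, hgap⟩ := hK.prop
    refine ⟨hcl.sdiff isOpen_Ioo, sdiff_subset.trans hsub,
      ⟨h0, fun h => absurd h.1 (_root_.not_lt.2 (hsub hs).1)⟩,
      ⟨h1, fun h => absurd h.2 (_root_.not_lt.2 (hsub ht).2)⟩, ?_⟩
    intro u hu v hv huv hno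
    by_cases hr : ∃ r ∈ K, r ∈ Ioo u v
    · obtain ⟨r, hrK, hr⟩ := hr
      have hrst : r ∈ Ioo s t := by
        by_contra h
        exact hno r ⟨hrK, h⟩ hr
      have hs' := hno s ⟨hs, fun h => lt_irrefl _ h.1⟩
      have ht' := hno t ⟨ht, fun h => lt_irrefl _ h.2⟩
      have hsu : s ≤ u := by
        by_contra! h
        exact hs' ⟨h, hrst.1.trans hr.2⟩
      have htv : v ≤ t := by
        by_contra! h
        exact ht' ⟨hr.1.trans hrst.2, h⟩
      have hus : u ≤ s := by
        by_contra! h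
        exact hu.2 ⟨h, hr.1.trans hrst.2⟩
      have hvt : t ≤ v := by
        by_contra! h
        exact hv.2 ⟨hrst.1.trans hr.2, h⟩
      rw [le_antisymm hus hsu, le_antisymm htv hvt, hf]
    · push Not at hr
      exact hgap u hu.1 v hv.1 huv hr
  intro r hr
  exact (hK.le_of_le hgood sdiff_subset hr).2

variable {X : Type*} [MetricSpace X] [CompactSpace X]

/-- Distinct points joined by a path are joined by an arc inside the path. -/
theorem exists_isArc_of_continuousOn {f : ℝ → X} (hf : ContinuousOn f (Icc 0 1))
    (h01 : f 0 ≠ f 1) : ∃ α ⊆ f '' Icc 0 1, IsArc (f 0) (f 1) α := by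
  obtain ⟨K, hK⟩ := exists_minimal_isShortcut hf
  have hKg := hK.prop
  obtain ⟨hcl, hsub, h0, h1, hgap⟩ := id hKg
  have hcp : IsCompact K := isCompact_Icc.of_isClosed_subset hcl hsub
  have : Nonempty X := ⟨f 0⟩
  set x := TopologicalSpace.denseSeq X with hx
  -- the initial segments of the arc, and a strictly monotone size function on them
  set A : ℝ → Set X := fun t => f '' (K ∩ Iic t) with hA
  have hAmono : ∀ {s t}, s ≤ t → A s ⊆ A t := fun h =>
    image_mono (inter_subset_inter_right _ (Iic_subset_Iic.2 h))
  have hAne : ∀ {t}, 0 ≤ t → (A t).Nonempty := fun h => ⟨f 0, 0, ⟨h0, h⟩, rfl⟩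
  have hAcl : ∀ t, IsClosed (A t) := fun t =>
    ((hcp.inter_right isClosed_Iic).image_of_continuousOn
      (hf.mono (inter_subset_left.trans hsub))).isClosed
  set φ : ℝ → ℝ := fun t => ∑' m : ℕ, (1 / 2 : ℝ) ^ m * infDist (x m) (A t) with hφ
  have hbound : ∀ {t}, 0 ≤ t → ∀ z, infDist z (A t) ≤ diam (univ : Set X) := fun h z =>
    (infDist_le_dist_of_mem (hAne h).some_mem).trans
      (dist_le_diam_of_mem isBounded_of_compactSpace trivial trivial)
  have hterm : ∀ {t}, 0 ≤ t → ∀ m : ℕ,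
      ‖(1 / 2 : ℝ) ^ m * infDist (x m) (A t)‖ ≤ (1 / 2 : ℝ) ^ m * diam (univ : Set X) := by
    intro t ht m
    rw [Real.norm_of_nonneg (by positivity [infDist_nonneg (x := x m) (s := A t)])]
    exact mul_le_mul_of_nonneg_left (hbound ht _) (by positivity)
  have hsummD : Summable fun m : ℕ => (1 / 2 : ℝ) ^ m * diam (univ : Set X) :=
    summable_geometric_two.mul_right _
  have hsumm : ∀ {t}, 0 ≤ t → Summable fun m : ℕ => (1 / 2 : ℝ) ^ m * infDist (x m) (A t) :=
    fun ht => Summable.of_norm_bounded hsummD (hterm ht)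
  have hinfc : ∀ z, ContinuousOn (fun t => infDist z (A t)) (Icc 0 1) := by
    intro z
    rw [Metric.continuousOn_iff]
    intro t ht ε hε
    obtain ⟨δ, hδ, hδf⟩ := Metric.uniformContinuousOn_iff.1
      (isCompact_Icc.uniformContinuousOn_of_continuous hf) (ε / 2) (half_pos hε)
    have key : ∀ s ∈ Icc (0 : ℝ) 1, ∀ t ∈ Icc (0 : ℝ) 1, s ≤ t → t - s < δ →
        infDist z (A s) - ε / 2 ≤ infDist z (A t) := by
      intro s hs t ht hst hd
      refine (le_infDist (hAne ht.1)).2 ?_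
      rintro _ ⟨r, ⟨hrK, hrt⟩, rfl⟩
      rcases le_or_gt r s with hrs | hrs
      · linarith [infDist_le_dist_of_mem (x := z) (show f r ∈ A s from ⟨r, ⟨hrK, hrs⟩, rfl⟩)]
      · obtain ⟨u, hu, v, hv, hus, hsv, hfe, -, hmin⟩ := hKg.exists_bracket hs
        have hvr := hmin r hrK hrs.le
        have h1 := infDist_le_dist_of_mem (x := z) (show f u ∈ A s from ⟨u, ⟨hu, hus⟩, rfl⟩)
        have h2 := hδf v (hsub hv) r (hsub hrK) (by
          rw [Real.dist_eq, abs_lt]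
          have : r ≤ t := hrt
          constructor <;> linarith)
        rw [← hfe] at h2
        linarith [dist_triangle_right z (f u) (f r)]
    refine ⟨δ, hδ, fun s hs hd => ?_⟩
    rw [Real.dist_eq, abs_lt] at hd ⊢
    rcases le_total s t with h | h
    · have k1 := key s hs t ht h (by linarith)
      have k2 := infDist_le_infDist_of_subset (x := z) (hAmono h) (hAne hs.1)
      constructor <;> linarith
    · have k1 := key t ht s hs h (by linarith)
      have k2 := infDist_le_infDist_of_subset (x := z) (hAmono h) (hAne ht.1)
      constructor <;> linarith
  have hφc : ContinuousOn φ (Icc 0 1) :=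
    continuousOn_tsum (fun m => continuousOn_const.mul (hinfc (x m))) hsummD
      fun m t ht => hterm ht.1 m
  have hφanti : ∀ {s t}, 0 ≤ s → s ≤ t → φ t ≤ φ s := fun {s t} hs hst =>
    (hsumm (hs.trans hst)).tsum_le_tsum (fun m => mul_le_mul_of_nonneg_left
      (infDist_le_infDist_of_subset (hAmono hst) (hAne hs)) (by positivity)) (hsumm hs)
  have hmemA : ∀ s ∈ K, ∀ t ∈ K, s ≤ t → φ s = φ t → f t ∈ A s := by
    intro s hs t ht hst he
    by_contra hn
    have hs0 := (hsub hs).1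
    have hρ := ((hAcl s).notMem_iff_infDist_pos (hAne hs0)).1 hn
    obtain ⟨y, hy, m, rfl⟩ := Metric.dense_iff.1 (TopologicalSpace.denseRange_denseSeq X) (f t)
      (infDist (f t) (A s) / 2) (half_pos hρ)
    rw [mem_ball] at hy
    have i1 : infDist (x m) (A t) ≤ dist (x m) (f t) :=
      infDist_le_dist_of_mem ⟨t, ⟨ht, self_mem_Iic⟩, rfl⟩
    have i2 : infDist (f t) (A s) ≤ infDist (x m) (A s) + dist (f t) (x m) :=
      infDist_le_infDist_add_dist
    rw [dist_comm] at i2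
    have hlt : φ t < φ s := Summable.tsum_lt_tsum (i := m)
      (fun m => mul_le_mul_of_nonneg_left
        (infDist_le_infDist_of_subset (hAmono hst) (hAne hs0)) (by positivity))
      (mul_lt_mul_of_pos_left (by linarith) (by positivity)) (hsumm (hs0.trans hst)) (hsumm hs0)
    exact hlt.ne' he
  have hinj : ∀ s ∈ K, ∀ t ∈ K, s ≤ t → φ s = φ t → f s = f t := by
    intro s hs t ht hst he
    rcases hst.eq_or_lt with rfl | hlt
    · rfl
    obtain ⟨r, ⟨hrK, hrs⟩, hrt⟩ := hmemA s hs t ht hst he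
    rcases (show r ≤ s from hrs).eq_or_lt with rfl | hrs'
    · exact hrt
    · exact absurd ⟨hrs', hlt⟩
        (hK.notMem_Ioo_of_isShortcut hrK ht hrt s hs)
  have hwell : ∀ s ∈ K, ∀ t ∈ K, s ≤ t → f s = f t → φ s = φ t := by
    intro s hs t ht hst he
    rcases hst.eq_or_lt with rfl | hlt
    · rfl
    have : A s = A t := by
      refine Subset.antisymm (hAmono hst) ?_
      rintro _ ⟨r, ⟨hrK, hrt⟩, rfl⟩
      rcases le_or_gt r s with hrs | hrs
      · exact ⟨r, ⟨hrK, hrs⟩, rfl⟩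
      · rcases (show r ≤ t from hrt).eq_or_lt with rfl | hrt'
        · exact ⟨s, ⟨hs, self_mem_Iic⟩, he⟩
        · exact absurd ⟨hrs, hrt'⟩ (hK.notMem_Ioo_of_isShortcut hs ht he r hrK)
    simp only [hφ, this]
  have hinj' : ∀ s ∈ K, ∀ t ∈ K, φ s = φ t → f s = f t := fun s hs t ht he =>
    (le_total s t).elim (fun h => hinj s hs t ht h he) fun h => (hinj t ht s hs h he.symm).symm
  have hwell' : ∀ s ∈ K, ∀ t ∈ K, f s = f t → φ s = φ t := fun s hs t ht he =>
    (le_total s t).elim (fun h => hwell s hs t ht h he) fun h => (hwell t ht s hs h he.symm).symm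
  have hsurj : ∀ y ∈ Icc (φ 1) (φ 0), ∃ t ∈ K, φ t = y := by
    intro y hy
    obtain ⟨t, ht, rfl⟩ := intermediate_value_Icc' zero_le_one hφc hy
    obtain ⟨u, hu, -, -, hut, -, -, hmax, -⟩ := hKg.exists_bracket ht
    have : A u = A t := Subset.antisymm (hAmono hut)
      (image_mono fun r hr => ⟨hr.1, hmax r hr.1 hr.2⟩)
    exact ⟨u, hu, by simp only [hφ, this]⟩
  have hlt : φ 1 < φ 0 := lt_of_le_of_ne (hφanti le_rfl zero_le_one)
    fun h => h01 (hinj' 0 h0 1 h1 h.symm)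
  choose! τ hτK hτ using hsurj
  have hφmem : ∀ t ∈ K, φ t ∈ Icc (φ 1) (φ 0) := fun t ht =>
    ⟨hφanti (hsub ht).1 (hsub ht).2, hφanti le_rfl (hsub ht).1⟩
  have heφ : ∀ t ∈ K, f (τ (φ t)) = f t := fun t ht =>
    hinj' _ (hτK _ (hφmem t ht)) _ ht (hτ _ (hφmem t ht))
  have hec : ContinuousOn (fun y => f (τ y)) (Icc (φ 1) (φ 0)) := by
    rw [continuousOn_iff_isClosed]
    intro S hS
    have hKS : IsCompact (K ∩ f ⁻¹' S) := hcp.of_isClosed_subset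
      ((hf.mono hsub).preimage_isClosed_of_isClosed hcl hS) inter_subset_left
    refine ⟨φ '' (K ∩ f ⁻¹' S), (hKS.image_of_continuousOn
      (hφc.mono (inter_subset_left.trans hsub))).isClosed, Subset.antisymm ?_ ?_⟩
    · rintro y ⟨hyS, hy⟩
      exact ⟨⟨τ y, ⟨hτK y hy, hyS⟩, hτ y hy⟩, hy⟩
    · rintro _ ⟨⟨t, ⟨htK, htS⟩, rfl⟩, hy⟩
      refine ⟨?_, hy⟩
      rw [mem_preimage, heφ t htK]
      exact htS
  have hei : InjOn (fun y => f (τ y)) (Icc (φ 1) (φ 0)) := by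
    intro y hy z hz hyz
    have := hwell' _ (hτK y hy) _ (hτK z hz) hyz
    rwa [hτ y hy, hτ z hz] at this
  refine ⟨(fun y => f (τ y)) '' Icc (φ 1) (φ 0), ?_,
    IsArc.symm ⟨_, φ 1, φ 0, hlt, hec, hei, heφ 1 h1, heφ 0 h0, rfl⟩⟩
  rintro _ ⟨y, hy, rfl⟩
  exact ⟨_, hsub (hτK y hy), rfl⟩

lemma JoinedIn.exists_isArc {S : Set X} {a b : X} (h : JoinedIn S a b) (hab : a ≠ b) :
    ∃ α ⊆ S, IsArc a b α := by
  have hc : ContinuousOn h.somePath.extend (Icc 0 1) := h.somePath.continuous_extend.continuousOn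
  obtain ⟨α, hα, harc⟩ := exists_isArc_of_continuousOn hc (by simpa using hab)
  refine ⟨α, hα.trans ?_, by simpa using harc⟩
  rintro _ ⟨t, ht, rfl⟩
  rw [h.somePath.extend_apply ht]
  exact h.somePath_mem _

end PathToArc

section LocallyConnected

variable {X : Type*} [MetricSpace X]

lemma exists_isOpen_isConnected_subset [LocallyConnectedSpace X] {x : X} {U : Set X}
    (hU : U ∈ nhds x) :
    ∃ V ⊆ U, IsOpen V ∧ x ∈ V ∧ IsConnected V :=
  locallyConnectedSpace_iff_subsets_isOpen_isConnected.1 inferInstance x U hU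

/-- Paths obtained by concatenating small links: every link joins two points of a small open
connected subset of `V`, and stays close to the image of these points in the ambient space `E`. -/
inductive ChainPath {E : Type*} [MetricSpace E] (κ : X → E) (V : Set X) (ε : ℝ) :
    (a b : X) → Path (κ a) (κ b) → Prop
  | link {a b : X} (W : Set X) (g : Path (κ a) (κ b)) (hWo : IsOpen W) (hWc : IsPreconnected W)
      (hWV : W ⊆ V) (ha : a ∈ W) (hb : b ∈ W) (hdist : ∀ x ∈ W, ∀ y ∈ W, dist x y ≤ ε)
      (hg : ∀ t, dist (g t) (κ a) ≤ ε) : ChainPath κ V ε a b g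
  | trans {a b c : X} {g : Path (κ a) (κ b)} {h : Path (κ b) (κ c)}
      (hg : ChainPath κ V ε a b g) (hh : ChainPath κ V ε b c h) : ChainPath κ V ε a c (g.trans h)

namespace ChainPath

lemma mono {E : Type*} [MetricSpace E] {κ : X → E} {V V' : Set X} {ε : ℝ} (hVV' : V ⊆ V')
    {a b : X} {g : Path (κ a) (κ b)} (h : ChainPath κ V ε a b g) : ChainPath κ V' ε a b g := by
  induction h with
  | link W g hWo hWc hWV ha hb hdist hg => exact link W g hWo hWc (hWV.trans hVV') ha hb hdist hg
  | trans _ _ ih₁ ih₂ => exact trans ih₁ ih₂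

lemma exists_dist_le {E : Type*} [MetricSpace E] {κ : X → E} {V : Set X} {ε : ℝ} {a b : X}
    {g : Path (κ a) (κ b)} (h : ChainPath κ V ε a b g) (t : unitInterval) :
    ∃ x ∈ V, dist (g t) (κ x) ≤ ε := by
  induction h generalizing t with
  | @link a b W g hWo hWc hWV ha hb hdist hg => exact ⟨a, hWV ha, hg t⟩
  | trans _ _ ih₁ ih₂ =>
    rw [Path.trans_apply]
    split_ifs
    · exact ih₁ _
    · exact ih₂ _

lemma exists_of_isPreconnected [LocallyConnectedSpace X] {E : Type*} [NormedAddCommGroup E]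
    [NormedSpace ℝ E] {κ : X → E} (hκ : Isometry κ) {V : Set X} (hVo : IsOpen V)
    (hVc : IsPreconnected V) {a b : X} (ha : a ∈ V) (hb : b ∈ V) {ε : ℝ} (hε : 0 < ε) :
    ∃ g, ChainPath κ V ε a b g := by
  refine hVc.induction₂' (fun a b => ∃ g, ChainPath κ V ε a b g) (fun x hx => ?_)
    (fun x y z _ _ _ ⟨g, hg⟩ ⟨h, hh⟩ => ⟨_, hg.trans hh⟩) ha hb
  obtain ⟨W, hW, hWo, hxW, hWc⟩ := exists_isOpen_isConnected_subset
    (Filter.inter_mem (hVo.mem_nhds hx) (ball_mem_nhds x (half_pos hε)))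
  have hdist : ∀ y ∈ W, ∀ z ∈ W, dist y z ≤ ε := by
    intro y hy z hz
    have h₁ := mem_ball.1 (hW hy).2
    have h₂ := mem_ball.1 (hW hz).2
    linarith [dist_triangle_right y z x]
  have hlink : ∀ y ∈ W, ∀ z ∈ W, ∃ g, ChainPath κ V ε y z g := by
    intro y hy z hz
    have hj : JoinedIn (closedBall (κ y) ε) (κ y) (κ z) :=
      ((convex_closedBall (κ y) ε).isPathConnected ⟨κ y, mem_closedBall_self hε.le⟩).joinedIn _
        (mem_closedBall_self hε.le) _ (by rw [mem_closedBall, hκ.dist_eq]; exact hdist z hz y hy)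
    exact ⟨hj.somePath, link W _ hWo hWc.isPreconnected (hW.trans inter_subset_left) hy hz hdist
      fun t => hj.somePath_mem t⟩
  filter_upwards [mem_nhdsWithin_of_mem_nhds (hWo.mem_nhds hxW)] with y hy
  exact ⟨hlink x hxW y hy, hlink y hy x hxW⟩

lemma exists_refinement [LocallyConnectedSpace X] {E : Type*} [NormedAddCommGroup E]
    [NormedSpace ℝ E] {κ : X → E} (hκ : Isometry κ) {V : Set X} {ε δ : ℝ} (hδ : 0 < δ)
    (hδε : δ ≤ ε) {a b : X} {g : Path (κ a) (κ b)} (h : ChainPath κ V ε a b g) :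
    ∃ g', ChainPath κ V δ a b g' ∧ ∀ t, dist (g t) (g' t) ≤ 3 * ε := by
  induction h with
  | @link a b W g hWo hWc hWV ha hb hdist hg =>
    obtain ⟨g', hg'⟩ := exists_of_isPreconnected hκ hWo hWc ha hb hδ
    refine ⟨g', hg'.mono hWV, fun t => ?_⟩
    obtain ⟨x, hx, hxt⟩ := hg'.exists_dist_le t
    have h₁ : dist (κ x) (κ a) ≤ ε := by rw [hκ.dist_eq]; exact hdist x hx a ha
    have h₂ := dist_triangle (g' t) (κ x) (κ a)
    linarith [dist_triangle_right (g t) (g' t) (κ a), hg t]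
  | trans _ _ ih₁ ih₂ =>
    obtain ⟨g₁, hg₁, h₁⟩ := ih₁
    obtain ⟨g₂, hg₂, h₂⟩ := ih₂
    refine ⟨_, hg₁.trans hg₂, fun t => ?_⟩
    rw [Path.trans_apply, Path.trans_apply]
    split_ifs
    · exact h₁ _
    · exact h₂ _

end ChainPath

variable [CompactSpace X] [LocallyConnectedSpace X]

lemma IsOpen.joinedIn_closure_of_isPreconnected {V : Set X} (hVo : IsOpen V)
    (hVc : IsPreconnected V) {a b : X} (ha : a ∈ V) (hb : b ∈ V) : JoinedIn (closure V) a b := by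
  set κ := kuratowskiEmbedding X
  have hκ : Isometry κ := kuratowskiEmbedding.isometry X
  have hstep : ∀ (n : ℕ) (g : {g // ChainPath κ V ((1 / 2) ^ n) a b g}),
      ∃ g' : {g // ChainPath κ V ((1 / 2) ^ (n + 1)) a b g},
        ∀ t, dist (g.1 t) (g'.1 t) ≤ 3 * (1 / 2) ^ n := by
    rintro n ⟨g, hg⟩
    obtain ⟨g', hg', h⟩ := hg.exists_refinement hκ (δ := (1 / 2) ^ (n + 1)) (by positivity)
      (pow_le_pow_of_le_one (by norm_num) (by norm_num) n.le_succ)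
    exact ⟨⟨g', hg'⟩, h⟩
  choose next hnext using hstep
  obtain ⟨g₀, hg₀⟩ := ChainPath.exists_of_isPreconnected hκ hVo hVc ha hb
    (show (0 : ℝ) < (1 / 2) ^ 0 by norm_num)
  let g : (n : ℕ) → {g // ChainPath κ V ((1 / 2) ^ n) a b g} := fun n =>
    Nat.rec ⟨g₀, hg₀⟩ (fun n g => next n g) n
  have hdist : ∀ n, dist (g n).1.toContinuousMap (g (n + 1)).1.toContinuousMap
      ≤ 3 * (1 / 2) ^ n := fun n =>
    (ContinuousMap.dist_le (by positivity)).2 fun t => hnext n (g n) t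
  obtain ⟨G, hG⟩ := cauchySeq_tendsto_of_complete
    (cauchySeq_of_le_geometric (1 / 2) 3 (by norm_num) hdist)
  have hGt : ∀ t, Filter.Tendsto (fun n => (g n).1 t) Filter.atTop (nhds (G t)) := fun t =>
    ((ContinuousEvalConst.continuous_eval_const (F := C(unitInterval, _)) t).tendsto G).comp hG
  have hG0 : G 0 = κ a := tendsto_nhds_unique (hGt 0) (by simp)
  have hG1 : G 1 = κ b := tendsto_nhds_unique (hGt 1) (by simp)
  have hmem : ∀ t, ∃ x ∈ closure V, κ x = G t := by
    intro t
    have hcl : IsClosed (κ '' closure V) :=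
      (isClosed_closure.isCompact.image hκ.continuous).isClosed
    refine hcl.closure_subset (Metric.mem_closure_iff.2 fun ε hε => ?_)
    obtain ⟨n, hn⟩ := ((Metric.tendsto_atTop.1 (hGt t) (ε / 2) (half_pos hε)))
    obtain ⟨m, hm⟩ := exists_pow_lt_of_lt_one (half_pos hε) (show (1 / 2 : ℝ) < 1 by norm_num)
    obtain ⟨x, hxV, hx⟩ := (g (max n m)).2.exists_dist_le t
    refine ⟨κ x, mem_image_of_mem _ (subset_closure hxV), ?_⟩
    have h₁ := hn _ (le_max_left n m)
    have h₂ : (1 / 2 : ℝ) ^ max n m ≤ (1 / 2) ^ m :=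
      pow_le_pow_of_le_one (by norm_num) (by norm_num) (le_max_right n m)
    linarith [dist_triangle_left (G t) (κ x) ((g (max n m)).1 t)]
  choose f hfV hf using hmem
  have hfc : Continuous f := by
    rw [hκ.isUniformInducing.isInducing.continuous_iff]
    exact G.continuous.congr fun t => (hf t).symm
  exact ⟨⟨⟨f, hfc⟩, hκ.injective ((hf 0).trans hG0), hκ.injective ((hf 1).trans hG1)⟩, hfV⟩

lemma IsOpen.joinedIn_of_isPreconnected {V : Set X} (hVo : IsOpen V)
    (hVc : IsPreconnected V) {a b : X} (ha : a ∈ V) (hb : b ∈ V) : JoinedIn V a b := by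
  refine hVc.induction₂' (JoinedIn V) (fun x hx => ?_) (fun _ _ _ _ _ _ h h' => h.trans h') ha hb
  obtain ⟨ε, hε, hεV⟩ := Metric.nhds_basis_closedBall.mem_iff.1 (hVo.mem_nhds hx)
  obtain ⟨W, hW, hWo, hxW, hWc⟩ := exists_isOpen_isConnected_subset (closedBall_mem_nhds x hε)
  have hWV : closure W ⊆ V := (closure_minimal hW isClosed_closedBall).trans hεV
  filter_upwards [mem_nhdsWithin_of_mem_nhds (hWo.mem_nhds hxW)] with y hy
  have h := (hWo.joinedIn_closure_of_isPreconnected hWc.isPreconnected hxW hy).mono hWV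
  exact ⟨h, h.symm⟩

lemma IsOpen.exists_isArc {V : Set X} (hVo : IsOpen V) (hVc : IsPreconnected V) {a b : X}
    (ha : a ∈ V) (hb : b ∈ V) (hab : a ≠ b) : ∃ α ⊆ V, IsArc a b α :=
  (hVo.joinedIn_of_isPreconnected hVc ha hb).exists_isArc hab

end LocallyConnected

section InfiniteConcatenation

variable {X : Type*} [MetricSpace X]

/-- The concatenation of the `n` paths `γ k, …, γ (k + n - 1)`, followed by a constant path. -/
noncomputable def truncatedConcat {p : ℕ → X} (γ : ∀ n, Path (p n) (p (n + 1))) :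
    ℕ → (k : ℕ) → Σ b, Path (p k) b
  | 0, k => ⟨p k, Path.refl (p k)⟩
  | n + 1, k => ⟨_, (γ k).trans (truncatedConcat γ n (k + 1)).2⟩

variable {p : ℕ → X} {γ : ∀ n, Path (p n) (p (n + 1))} {x : X}

lemma truncatedConcat_fst (n k : ℕ) : (truncatedConcat γ n k).1 = p (k + n) := by
  induction n generalizing k with
  | zero => rfl
  | succ n ih =>
    rw [truncatedConcat, ih]
    congr 1
    omega

lemma truncatedConcat_mem {S : Set X} (hS : ∀ n t, γ n t ∈ S) (n k : ℕ) (t : unitInterval) :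
    (truncatedConcat γ n k).2 t ∈ S := by
  induction n generalizing k t with
  | zero =>
    have := hS k 0
    rw [(γ k).source] at this
    exact this
  | succ n ih =>
    change ((γ k).trans (truncatedConcat γ n (k + 1)).2) t ∈ S
    rw [Path.trans_apply]
    split_ifs
    · exact hS _ _
    · exact ih _ _

lemma dist_truncatedConcat_le (hγ : ∀ n t, dist (γ n t) x ≤ (1 / 2) ^ n) (n k : ℕ)
    (t : unitInterval) :
    dist ((truncatedConcat γ n k).2 t) ((truncatedConcat γ (n + 1) k).2 t)
      ≤ 2 * (1 / 2) ^ (k + n) := by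
  induction n generalizing k t with
  | zero =>
    have h₁ := hγ k 0
    rw [(γ k).source] at h₁
    have h₂ : dist ((truncatedConcat γ 1 k).2 t) x ≤ (1 / 2) ^ k := by
      change dist (((γ k).trans (Path.refl (p (k + 1)))) t) x ≤ _
      rw [Path.trans_apply]
      split_ifs
      · exact hγ _ _
      · simpa using hγ k 1
    calc dist (p k) ((truncatedConcat γ 1 k).2 t)
        ≤ dist (p k) x + dist ((truncatedConcat γ 1 k).2 t) x := dist_triangle_right _ _ _
      _ ≤ 2 * (1 / 2) ^ (k + 0) := by rw [add_zero]; linarith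
  | succ n ih =>
    change dist (((γ k).trans (truncatedConcat γ n (k + 1)).2) t)
      (((γ k).trans (truncatedConcat γ (n + 1) (k + 1)).2) t) ≤ _
    rw [Path.trans_apply, Path.trans_apply]
    split_ifs
    · rw [dist_self]
      positivity
    · rw [show k + (n + 1) = k + 1 + n by omega]
      exact ih (k + 1) _

lemma joinedIn_of_forall_dist_le [CompactSpace X] (hγ : ∀ n t, dist (γ n t) x ≤ (1 / 2) ^ n) :
    JoinedIn (insert x (⋃ n, range (γ n))) (p 0) x := by
  have hdist : ∀ n, dist (truncatedConcat γ n 0).2.toContinuousMap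
      (truncatedConcat γ (n + 1) 0).2.toContinuousMap ≤ 2 * (1 / 2) ^ n := fun n =>
    (ContinuousMap.dist_le (by positivity)).2 fun t => by
      simpa using dist_truncatedConcat_le hγ n 0 t
  obtain ⟨G, hG⟩ := cauchySeq_tendsto_of_complete
    (cauchySeq_of_le_geometric (1 / 2) 2 (by norm_num) hdist)
  have hGt : ∀ t, Filter.Tendsto (fun n => (truncatedConcat γ n 0).2 t) Filter.atTop
      (nhds (G t)) := fun t =>
    ((ContinuousEvalConst.continuous_eval_const (F := C(unitInterval, _)) t).tendsto G).comp hG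
  have hG0 : G 0 = p 0 := tendsto_nhds_unique (hGt 0) (by simp)
  have hG1 : G 1 = x := by
    refine tendsto_nhds_unique (hGt 1) (tendsto_iff_dist_tendsto_zero.2 ?_)
    refine squeeze_zero (fun _ => dist_nonneg) (fun n => ?_)
      (tendsto_pow_atTop_nhds_zero_of_lt_one (by norm_num : (0 : ℝ) ≤ 1 / 2) (by norm_num))
    simpa [truncatedConcat_fst] using hγ n 0
  refine ⟨⟨G, hG0, hG1⟩, fun t => ?_⟩
  by_contra hcon
  rw [mem_insert_iff, not_or] at hcon
  obtain ⟨N, hN⟩ := exists_pow_lt_of_lt_one (dist_pos.2 hcon.1) (show (1 / 2 : ℝ) < 1 by norm_num)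
  have hcl : IsClosed ((⋃ n ∈ Finset.range N, range (γ n)) ∪ closedBall x ((1 / 2) ^ N)) :=
    ((Finset.range N).finite_toSet.isClosed_biUnion fun n _ =>
      (isCompact_range (γ n).continuous).isClosed).union isClosed_closedBall
  have hmem := hcl.mem_of_tendsto (hGt t) (Filter.Eventually.of_forall fun n =>
    truncatedConcat_mem (fun m s => ?_) n 0 t)
  · rcases hmem with h | h
    · obtain ⟨n, -, h⟩ := mem_iUnion₂.1 h
      exact hcon.2 (mem_iUnion.2 ⟨n, h⟩)
    · exact absurd (mem_closedBall.1 h) (not_le.2 hN)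
  · rcases lt_or_ge m N with h | h
    · exact Or.inl (mem_iUnion₂.2 ⟨m, Finset.mem_range.2 h, mem_range_self s⟩)
    · exact Or.inr ((hγ m s).trans (pow_le_pow_of_le_one (by norm_num) (by norm_num) h))

end InfiniteConcatenation

section Rays

variable {X : Type} [MetricSpace X] [CompactSpace X]

/-- Along a chain of compact cyclicly connected sets converging to `x`, two disjoint rays can be
traced; they close up to an arc through `x`. -/
lemma exists_isArc_of_cyclicallyConnected_chain {K : ℕ → Set X} {x p q : X}
    (hKc : ∀ n, IsCompact (K n)) (hK : ∀ n, CyclicallyConnected (K n))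
    (hKK : ∀ n, (K n ∩ K (n + 1)).Nontrivial) (hdisj : ∀ n m, n + 2 ≤ m → Disjoint (K n) (K m))
    (hball : ∀ n, K n ⊆ closedBall x ((1 / 2) ^ n)) (hx : x ∉ K 0)
    (hp : p ∈ K 0) (hq : q ∈ K 0) (hp1 : p ∉ K 1) (hq1 : q ∉ K 1) (hpq : p ≠ q) :
    ∃ α, IsArc p q α ∧ x ∈ α := by
  let P : ℕ → X × X → Prop := fun n s =>
    s.1 ∈ K n ∧ s.2 ∈ K n ∧ s.1 ∉ K (n + 1) ∧ s.2 ∉ K (n + 1) ∧ s.1 ≠ s.2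
  have hstep : ∀ (n : ℕ) (s : {s // P n s}), ∃ (s' : {s // P (n + 1) s}) (α β : Set X),
      α ⊆ K n ∧ β ⊆ K n ∧ IsArc s.1.1 s'.1.1 α ∧ IsArc s.1.2 s'.1.2 β ∧
        α ∩ K (n + 1) = {s'.1.1} ∧ β ∩ K (n + 1) = {s'.1.2} ∧ Disjoint α β := by
    rintro n ⟨⟨p, q⟩, hp, hq, hp1, hq1, hpq⟩
    obtain ⟨p', hp', q', hq', α, β, hαK, hβK, hα, hβ, hαS, hβS, hαβ⟩ :=
      (hK n).exists_disjoint_arcs (hKc (n + 1)).isClosed (hKK n) hp hq hp1 hq1 hpq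
    have hd := disjoint_left.1 (hdisj n (n + 2) le_rfl)
    exact ⟨⟨(p', q'), hp', hq', hd (hαK hα.right_mem), hd (hβK hβ.right_mem),
      fun h => disjoint_left.1 hαβ hα.right_mem ((show p' = q' from h) ▸ hβ.right_mem)⟩,
      α, β, hαK, hβK, hα, hβ, hαS, hβS, hαβ⟩
  choose next α β hαK hβK hα hβ hαS hβS hαβ using hstep
  let s : (n : ℕ) → {s // P n s} := fun n =>
    Nat.rec ⟨(p, q), hp, hq, hp1, hq1, hpq⟩ (fun n s => next n s) n
  have hray : ∀ (r : ℕ → X) (γ : ℕ → Set X), (∀ n, IsArc (r n) (r (n + 1)) (γ n)) →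
      (∀ n, γ n ⊆ K n) → ∃ δ ⊆ insert x (⋃ n, γ n), IsArc (r 0) x δ := by
    intro r γ hγ hγK
    have hmem : ∀ n t, (hγ n).joinedIn.somePath t ∈ γ n := fun n t =>
      (hγ n).joinedIn.somePath_mem t
    have hj := joinedIn_of_forall_dist_le (γ := fun n => (hγ n).joinedIn.somePath) (x := x)
      fun n t => hball n (hγK n (hmem n t))
    refine (hj.mono (insert_subset_insert (iUnion_mono fun n => ?_))).exists_isArc ?_
    · rintro _ ⟨t, rfl⟩
      exact hmem n t
    · rintro rfl
      exact hx (hγK 0 (hγ 0).left_mem)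
  obtain ⟨δ₁, hδ₁, h₁⟩ := hray (fun n => (s n).1.1) (fun n => α n (s n)) (fun n => hα n (s n))
    fun n => hαK n (s n)
  obtain ⟨δ₂, hδ₂, h₂⟩ := hray (fun n => (s n).1.2) (fun n => β n (s n)) (fun n => hβ n (s n))
    fun n => hβK n (s n)
  refine ⟨δ₁ ∪ δ₂, h₁.trans h₂.symm ?_, Or.inl h₁.right_mem⟩
  rintro y ⟨hy₁, hy₂⟩
  rcases hδ₁ hy₁ with rfl | hy₁
  · rfl
  rcases hδ₂ hy₂ with rfl | hy₂
  · rfl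
  obtain ⟨n, hn⟩ := mem_iUnion.1 hy₁
  obtain ⟨m, hm⟩ := mem_iUnion.1 hy₂
  exfalso
  have hnK := hαK n (s n) hn
  have hmK := hβK m (s m) hm
  rcases lt_trichotomy n m with h | h | h
  · rcases (Nat.succ_le_of_lt h).eq_or_lt with rfl | h
    · have : y ∈ α n (s n) ∩ K (n + 1) := ⟨hn, hmK⟩
      rw [hαS n (s n)] at this
      rw [mem_singleton_iff.1 this] at hm
      exact disjoint_left.1 (hαβ (n + 1) (s (n + 1))) (hα (n + 1) (s (n + 1))).left_mem hm
    · exact disjoint_left.1 (hdisj n m h) hnK hmK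
  · subst h
    exact disjoint_left.1 (hαβ n (s n)) hn hm
  · rcases (Nat.succ_le_of_lt h).eq_or_lt with rfl | h
    · have : y ∈ β m (s m) ∩ K (m + 1) := ⟨hm, hnK⟩
      rw [hβS m (s m)] at this
      rw [mem_singleton_iff.1 this] at hn
      exact disjoint_right.1 (hαβ (m + 1) (s (m + 1))) (hβ (m + 1) (s (m + 1))).left_mem hn
    · exact disjoint_left.1 (hdisj m n h) hmK hnK

end Rays

section Closed

lemma subset_connectedComponentIn_of_mem {X : Type*} [TopologicalSpace X]
    {A F : Set X} {x a : X} (hA : IsPreconnected A) (hAF : A ⊆ F) (ha : a ∈ A)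
    (hax : a ∈ connectedComponentIn F x) : A ⊆ connectedComponentIn F x := by
  rw [connectedComponentIn_eq hax]
  exact hA.subset_connectedComponentIn ha hAF

lemma IsArc.exists_dist_eq {X : Type*} [MetricSpace X] {a b x y : X} {α : Set X} {ρ : ℝ}
    (h : IsArc a b α) (ha : dist a x < ρ) (hy : y ∈ α) (hyρ : ρ ≤ dist y x) :
    ∃ c, ∃ β ⊆ α, IsArc a c β ∧ dist c x = ρ ∧ β ⊆ closedBall x ρ := by
  obtain ⟨f, hfc, hfi, rfl, rfl, rfl⟩ := h.exists_param zero_lt_one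
  obtain ⟨s, hs, rfl⟩ := hy
  have hφ : ContinuousOn (fun t => dist (f t) x) (Icc 0 1) :=
    (continuous_id.dist continuous_const).comp_continuousOn hfc
  have hcp : IsCompact (Icc 0 1 ∩ (fun t => dist (f t) x) ⁻¹' Ici ρ) :=
    isCompact_Icc.of_isClosed_subset
      (hφ.preimage_isClosed_of_isClosed isClosed_Icc isClosed_Ici) inter_subset_left
  obtain ⟨t, ⟨ht, htρ⟩, hmin⟩ := hcp.exists_isLeast ⟨s, hs, hyρ⟩
  obtain ⟨r, hr, hrρ⟩ := intermediate_value_Icc ht.1 (hφ.mono (Icc_subset_Icc_right ht.2))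
    ⟨ha.le, htρ⟩
  have hrt : r = t := le_antisymm hr.2 (hmin ⟨⟨hr.1, hr.2.trans ht.2⟩, hrρ.ge⟩)
  rw [hrt] at hrρ
  have ht0 : 0 < t := by
    refine lt_of_le_of_ne ht.1 ?_
    rintro rfl
    exact ha.ne hrρ
  refine ⟨f t, f '' Icc 0 t, image_mono (Icc_subset_Icc_right ht.2),
    IsArc.of_param hfc hfi le_rfl ht0 ht.2, hrρ, ?_⟩
  rintro _ ⟨r, hr, rfl⟩
  rw [mem_closedBall]
  by_contra! hlt
  have := hmin ⟨⟨hr.1, hr.2.trans ht.2⟩, hlt.le⟩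
  rw [le_antisymm hr.2 this] at hlt
  exact hlt.ne' hrρ

namespace MaximalCyclic

variable {X : Type} [MetricSpace X] [CompactSpace X] [LocallyConnectedSpace X] {T : Set X}
  {f : ℝ → X}

lemma mem_of_mem_closure_of_arc (hT : MaximalCyclic T) (hfc : ContinuousOn f (Icc 0 1))
    (hfi : InjOn f (Icc 0 1)) (h0 : f 0 ∈ closure T) (h1 : f 1 ∈ T) {s : ℝ}
    (hs : s ∈ Ioc (0 : ℝ) 1) : f s ∈ T := by
  rcases hs.2.eq_or_lt with rfl | hs1
  · exact h1
  have hcl : IsClosed (f '' Icc s 1) :=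
    (isCompact_Icc.image_of_continuousOn (hfc.mono (Icc_subset_Icc_left hs.1.le))).isClosed
  have hcl' : IsClosed (f '' Icc 0 1) := (isCompact_Icc.image_of_continuousOn hfc).isClosed
  have h0s : f 0 ∉ f '' Icc s 1 := by
    rintro ⟨r, hr, hr0⟩
    have := hfi ⟨hs.1.le.trans hr.1, hr.2⟩ ⟨le_rfl, zero_le_one⟩ hr0
    linarith [hr.1, hs.1]
  obtain ⟨U, hUs, hUo, h0U, hUc⟩ := exists_isOpen_isConnected_subset (hcl.isOpen_compl.mem_nhds h0s)
  obtain ⟨t', ht'U, ht'T⟩ := mem_closure_iff.1 h0 U hUo h0U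
  have hlt : ∀ r ∈ Icc (0 : ℝ) 1, f r ∈ U → r < s := by
    intro r hr hrU
    by_contra! h
    exact hUs hrU ⟨r, ⟨h, hr.2⟩, rfl⟩
  by_cases htA : t' ∈ f '' Icc 0 1
  · obtain ⟨r, hr, rfl⟩ := htA
    have hrs := hlt r hr ht'U
    exact hT.subset_of_isArc (IsArc.of_param hfc hfi hr.1 (hrs.trans hs1) le_rfl) ht'T h1
      ⟨s, ⟨hrs.le, hs1.le⟩, rfl⟩
  · have h0A : f 0 ∈ f '' Icc 0 1 := ⟨0, ⟨le_rfl, zero_le_one⟩, rfl⟩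
    obtain ⟨E, hEU, hE⟩ := hUo.exists_isArc hUc.isPreconnected ht'U h0U
      fun h => htA (h ▸ h0A)
    obtain ⟨_, ⟨r, hr, rfl⟩, E', hE'E, hE', hE'A⟩ :=
      hE.exists_first_hit hcl' ⟨f 0, hE.right_mem, h0A⟩ htA
    have hrs := hlt r hr (hEU (hE'E hE'.right_mem))
    refine hT.subset_of_isArc (hE'.trans
      (IsArc.of_param hfc hfi hr.1 (hrs.trans hs1) le_rfl) ?_) ht'T h1
      (Or.inr ⟨s, ⟨hrs.le, hs1.le⟩, rfl⟩)
    rw [← hE'A]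
    exact inter_subset_inter_right _ (image_mono (Icc_subset_Icc_left hr.1))

lemma exists_isJordanCurve_of_mem_connectedComponentIn (hT : MaximalCyclic T)
    (hfc : ContinuousOn f (Icc 0 1)) (hfi : InjOn f (Icc 0 1)) (h0 : f 0 ∉ T)
    (hfT : ∀ s ∈ Ioc (0 : ℝ) 1, f s ∈ T) {U : Set X} (hUo : IsOpen U) {δ s : ℝ} (hδ : δ ≤ 1)
    (hfU : f '' Icc 0 δ ⊆ U) (hs : s ∈ Ioo 0 δ)
    (hcomp : f δ ∈ connectedComponentIn (U \ {f s}) (f 0)) :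
    ∃ u v, 0 < u ∧ u < s ∧ s < v ∧ v ≤ δ ∧ ∃ J ⊆ U ∩ T, IsJordanCurve J ∧ f '' Icc u v ⊆ J := by
  have hδ0 : 0 < δ := hs.1.trans hs.2
  have hsub : ∀ r ∈ Icc 0 δ, r ∈ Icc (0 : ℝ) 1 := fun r hr => ⟨hr.1, hr.2.trans hδ⟩
  have hs' : s ∈ Icc 0 δ := ⟨hs.1.le, hs.2.le⟩
  have hδ' : δ ∈ Icc 0 δ := ⟨hδ0.le, le_rfl⟩
  have h0' : (0 : ℝ) ∈ Icc 0 δ := ⟨le_rfl, hδ0.le⟩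
  have hinj : ∀ r ∈ Icc 0 δ, ∀ t ∈ Icc 0 δ, f r = f t → r = t := fun r hr t ht h =>
    hfi (hsub r hr) (hsub t ht) h
  have h0s : f 0 ∈ U \ {f s} := ⟨hfU ⟨0, h0', rfl⟩, fun h => hs.1.ne (hinj 0 h0' s hs' h)⟩
  obtain ⟨A, hA, hAarc⟩ := (hUo.sdiff isClosed_singleton).connectedComponentIn.exists_isArc
    isPreconnected_connectedComponentIn (mem_connectedComponentIn h0s) hcomp
    fun h => hδ0.ne (hinj 0 h0' δ hδ' h)
  have hAU : A ⊆ U \ {f s} := hA.trans (connectedComponentIn_subset _ _)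
  have hcl : ∀ a b, 0 ≤ a → b ≤ δ → IsClosed (f '' Icc a b) := fun a b ha hb =>
    (isCompact_Icc.image_of_continuousOn (hfc.mono (Icc_subset_Icc ha (hb.trans hδ)))).isClosed
  obtain ⟨_, ⟨v, hv, rfl⟩, A₁, hA₁A, hA₁, hA₁S⟩ := hAarc.exists_first_hit (hcl s δ hs.1.le le_rfl)
    ⟨f δ, hAarc.right_mem, δ, ⟨hs.2.le, le_rfl⟩, rfl⟩ (by
      rintro ⟨r, hr, hr0⟩
      have := hinj r ⟨hs.1.le.trans hr.1, hr.2⟩ 0 h0' hr0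
      linarith [hr.1, hs.1])
  have hsv : s < v := by
    refine lt_of_le_of_ne hv.1 ?_
    rintro rfl
    exact (hAU (hA₁A hA₁.right_mem)).2 rfl
  obtain ⟨_, ⟨u, hu, rfl⟩, A₂, hA₂A₁, hA₂, hA₂S⟩ := hA₁.symm.exists_first_hit
    (hcl 0 s le_rfl hs.2.le) ⟨f 0, hA₁.left_mem, 0, ⟨le_rfl, hs.1.le⟩, rfl⟩ (by
      rintro ⟨r, hr, hrv⟩
      have := hinj r ⟨hr.1, hr.2.trans hs.2.le⟩ v ⟨hs.1.le.trans hv.1, hv.2⟩ hrv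
      linarith [hr.2])
  have hus : u < s := by
    refine lt_of_le_of_ne hu.2 ?_
    rintro rfl
    exact (hAU (hA₁A (hA₂A₁ hA₂.right_mem))).2 rfl
  have hJ : IsJordanCurve (A₂ ∪ f '' Icc u v) := by
    refine hA₂.symm.isJordanCurve_union
      (IsArc.of_param hfc hfi hu.1 (hus.trans hsv) (hv.2.trans hδ)) ?_
    rintro _ ⟨hr₂, r, hr, rfl⟩
    rcases le_total r s with h | h
    · left
      have : f r ∈ A₂ ∩ f '' Icc 0 s := ⟨hr₂, r, ⟨hu.1.trans hr.1, h⟩, rfl⟩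
      rwa [hA₂S] at this
    · right
      have : f r ∈ A₁ ∩ f '' Icc s δ := ⟨hA₂A₁ hr₂, r, ⟨h, hr.2.trans hv.2⟩, rfl⟩
      rwa [hA₁S] at this
  have hJT : A₂ ∪ f '' Icc u v ⊆ T := by
    refine hT.subset_of_isJordanCurve hJ
      ⟨f s, ⟨hfT s ⟨hs.1, hs.2.le.trans hδ⟩, Or.inr ⟨s, ⟨hus.le, hsv.le⟩, rfl⟩⟩, f v,
        ⟨hfT v ⟨hs.1.trans hsv, hv.2.trans hδ⟩, Or.inr ⟨v, ⟨(hus.trans hsv).le, le_rfl⟩, rfl⟩⟩,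
        fun h => ?_⟩
    exact hsv.ne (hinj s hs' v ⟨hs.1.le.trans hv.1, hv.2⟩ h)
  have hu0 : 0 < u := by
    refine lt_of_le_of_ne hu.1 ?_
    rintro rfl
    exact h0 (hJT (Or.inl hA₂.right_mem))
  refine ⟨u, v, hu0, hus, hsv, hv.2, _, subset_inter (union_subset ?_ ?_) hJT, hJ,
    subset_union_right⟩
  · exact fun y hy => (hAU (hA₁A (hA₂A₁ hy))).1
  · exact (image_mono (Icc_subset_Icc hu.1 hv.2)).trans hfU

end MaximalCyclic

end Closed

namespace MaximalCyclic

variable {X : Type} [MetricSpace X] {T : Set X} {f : ℝ → X}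

/-- If `f s` separates `f 0` from `f δ` in `U`, then the side of `f 0` contains points of `T` at
distance `ρ` from `f 0`. -/
lemma exists_mem_connectedComponentIn_dist_eq (hT : MaximalCyclic T)
    (hfc : ContinuousOn f (Icc 0 1)) (hfi : InjOn f (Icc 0 1))
    (hfT : ∀ s ∈ Ioc (0 : ℝ) 1, f s ∈ T) {U : Set X} {δ s ρ : ℝ} (hδ : δ ≤ 1)
    (hfU : f '' Icc 0 δ ⊆ U) (hρ : 0 < ρ) (hρU : closedBall (f 0) ρ ⊆ U) (hs : s ∈ Ioo 0 δ)
    (hsep : f δ ∉ connectedComponentIn (U \ {f s}) (f 0)) :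
    ∃ y ∈ T, y ∈ connectedComponentIn (U \ {f s}) (f 0) ∧ dist y (f 0) = ρ := by
  have hδ0 : 0 < δ := hs.1.trans hs.2
  have hs1 : s ∈ Icc (0 : ℝ) 1 := ⟨hs.1.le, hs.2.le.trans hδ⟩
  obtain ⟨η, hη, hηρ⟩ := Metric.continuousOn_iff.1 hfc 0 ⟨le_rfl, zero_le_one⟩ ρ hρ
  set r := min η s / 2 with hr
  have hm : 0 < min η s := lt_min hη hs.1
  have hr0 : 0 < r := half_pos hm
  have hrη : r < η := (half_lt_self hm).trans_le (min_le_left _ _)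
  have hrs : r < s := (half_lt_self hm).trans_le (min_le_right _ _)
  have hr1 : r ∈ Icc (0 : ℝ) 1 := ⟨hr0.le, hrs.le.trans hs1.2⟩
  have hδ1 : δ ∈ Icc (0 : ℝ) 1 := ⟨hδ0.le, hδ⟩
  have hrρ : dist (f r) (f 0) < ρ :=
    hηρ r hr1 (by rwa [Real.dist_eq, sub_zero, abs_of_pos hr0])
  have hrR : f r ∈ connectedComponentIn (U \ {f s}) (f 0) := by
    have hsub : f '' Icc 0 r ⊆ U \ {f s} := by
      rintro _ ⟨t, ht, rfl⟩
      refine ⟨hfU ⟨t, ⟨ht.1, ht.2.trans (hrs.trans hs.2).le⟩, rfl⟩, fun h => ?_⟩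
      have := hfi ⟨ht.1, ht.2.trans hr1.2⟩ hs1 h
      linarith [ht.2]
    exact (isPreconnected_Icc.image f (hfc.mono (Icc_subset_Icc_right hr1.2)))
      |>.subset_connectedComponentIn ⟨0, ⟨le_rfl, hr0.le⟩, rfl⟩ hsub ⟨r, ⟨hr0.le, le_rfl⟩, rfl⟩
  obtain ⟨J, hJT, hJ, hrJ, hδJ⟩ := hT.2.1 (f r) (hfT r ⟨hr0, hr1.2⟩) (f δ) (hfT δ ⟨hδ0, hδ⟩)
  obtain ⟨α, hαJ, hα, hsα⟩ := hJ.exists_arc_avoiding hrJ hδJ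
    (fun h => (hrs.trans hs.2).ne (hfi hr1 hδ1 h))
    (fun h => hrs.ne' (hfi hs1 hr1 h)) (fun h => hs.2.ne (hfi hs1 hδ1 h))
  have hfar : ∃ y ∈ α, ρ ≤ dist y (f 0) := by
    by_contra! h
    refine hsep (subset_connectedComponentIn_of_mem hα.isPreconnected ?_ hα.left_mem hrR
      hα.right_mem)
    exact fun y hy => ⟨hρU (mem_closedBall.2 (h y hy).le), fun he => hsα (he ▸ hy)⟩
  obtain ⟨y, hyα, hyρ⟩ := hfar
  obtain ⟨c, β, hβα, hβ, hcρ, hβρ⟩ := hα.exists_dist_eq hrρ hyα hyρ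
  refine ⟨c, hJT (hαJ (hβα hβ.right_mem)), ?_, hcρ⟩
  refine subset_connectedComponentIn_of_mem hβ.isPreconnected ?_ hβ.left_mem hrR hβ.right_mem
  exact fun y hy => ⟨hρU (hβρ hy), fun he => hsα (he ▸ hβα hy)⟩

variable [CompactSpace X] [LocallyConnectedSpace X]

lemma exists_forall_mem_connectedComponentIn (hT : MaximalCyclic T)
    (hfc : ContinuousOn f (Icc 0 1)) (hfi : InjOn f (Icc 0 1)) (h0 : f 0 ∉ T)
    (hfT : ∀ s ∈ Ioc (0 : ℝ) 1, f s ∈ T) {U : Set X} (hUo : IsOpen U) {δ : ℝ}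
    (hδ : δ ∈ Ioc (0 : ℝ) 1) (hfU : f '' Icc 0 δ ⊆ U) :
    ∃ δ₁ ∈ Ioc 0 δ, ∀ s ∈ Ioo 0 δ₁, f δ ∈ connectedComponentIn (U \ {f s}) (f 0) := by
  by_contra! hcon
  have h0U : f 0 ∈ U := hfU ⟨0, ⟨le_rfl, hδ.1.le⟩, rfl⟩
  obtain ⟨ρ, hρ, hρU⟩ := Metric.nhds_basis_closedBall.mem_iff.1 (hUo.mem_nhds h0U)
  have hseq : ∀ n : ℕ, ∃ s ∈ Ioo 0 (δ / (n + 1)), f δ ∉ connectedComponentIn (U \ {f s}) (f 0) :=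
    fun n => hcon _ ⟨div_pos hδ.1 (by positivity),
      div_le_self hδ.1.le (by linarith [n.cast_nonneg (α := ℝ)])⟩
  choose s hs hsep using hseq
  have hsδ : ∀ n, s n ∈ Ioo 0 δ := fun n =>
    ⟨(hs n).1, (hs n).2.trans_le (div_le_self hδ.1.le (by linarith [n.cast_nonneg (α := ℝ)]))⟩
  have hs1 : ∀ n, s n ∈ Icc (0 : ℝ) 1 := fun n => ⟨(hsδ n).1.le, (hsδ n).2.le.trans hδ.2⟩
  have hs0 : Filter.Tendsto s Filter.atTop (nhds 0) :=
    squeeze_zero (fun n => (hs n).1.le) (fun n => (hs n).2.le)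
      (tendsto_const_div_atTop_nhds_zero_nat δ |>.comp (Filter.tendsto_add_atTop_nat 1) |>.congr
        fun n => by simp)
  have hw0 : Filter.Tendsto (fun n => f (s n)) Filter.atTop (nhds (f 0)) :=
    (hfc 0 ⟨le_rfl, zero_le_one⟩).tendsto.comp
      (tendsto_nhdsWithin_iff.2 ⟨hs0, Filter.Eventually.of_forall hs1⟩)
  have hy : ∀ n, ∃ y ∈ T, y ∈ connectedComponentIn (U \ {f (s n)}) (f 0) ∧ dist y (f 0) = ρ :=
    fun n => hT.exists_mem_connectedComponentIn_dist_eq hfc hfi hfT hδ.2 hfU hρ hρU (hsδ n) (hsep n)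
  choose y hyT hyR hyρ using hy
  obtain ⟨z, hzρ, φ, hφ, hz⟩ := (isClosed_sphere (x := f 0) (ε := ρ)).isCompact.tendsto_subseq
    fun n => mem_sphere.2 (hyρ n)
  rw [mem_sphere] at hzρ
  obtain ⟨W, hW, hWo, hzW, hWc⟩ := exists_isOpen_isConnected_subset
    (Filter.inter_mem (hUo.mem_nhds (hρU (mem_closedBall.2 hzρ.le)))
      ((isClosed_closedBall (x := f 0) (ε := ρ / 2)).isOpen_compl.mem_nhds (x := z)
        (by simp only [mem_compl_iff, mem_closedBall, not_le]; linarith)))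
  obtain ⟨N, hN⟩ := Filter.eventually_atTop.1
    ((hz.eventually (hWo.mem_nhds hzW)).and
      ((hw0.comp hφ.tendsto_atTop).eventually (closedBall_mem_nhds (f 0) (half_pos hρ))))
  have hWR : ∀ n ≥ N, W ⊆ connectedComponentIn (U \ {f (s (φ n))}) (f 0) := fun n hn =>
    subset_connectedComponentIn_of_mem hWc.isPreconnected
      (fun a ha => ⟨(hW ha).1, fun he => (hW ha).2 (he ▸ (hN n hn).2)⟩) (hN n hn).1 (hyR (φ n))
  set t := y (φ N) with ht
  have htW : t ∈ W := (hN N le_rfl).1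
  have hRo : ∀ n, IsOpen (connectedComponentIn (U \ {f (s n)}) (f 0)) := fun n =>
    (hUo.sdiff isClosed_singleton).connectedComponentIn
  have h0R : ∀ n, f 0 ∈ connectedComponentIn (U \ {f (s n)}) (f 0) := fun n =>
    mem_connectedComponentIn ⟨h0U, fun h => (hsδ n).1.ne (hfi ⟨le_rfl, zero_le_one⟩ (hs1 n) h)⟩
  obtain ⟨E, hER, hE⟩ := (hRo (φ N)).exists_isArc isPreconnected_connectedComponentIn
    (hWR N le_rfl htW) (h0R (φ N)) fun h => h0 (h ▸ hyT (φ N))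
  have hEU : E ⊆ U \ {f (s (φ N))} := hER.trans (connectedComponentIn_subset _ _)
  have hEf : E ∩ f '' Icc 0 (s (φ N)) ⊆ {f 0} := by
    rintro _ ⟨hrE, r, hr, rfl⟩
    by_contra hne
    have hr0 : 0 < r := lt_of_le_of_ne hr.1 (by rintro rfl; exact hne rfl)
    have hr1 : r ∈ Icc (0 : ℝ) 1 := ⟨hr.1, hr.2.trans (hs1 _).2⟩
    obtain ⟨n, hnr, hnN⟩ := (((hs0.comp hφ.tendsto_atTop).eventually (gt_mem_nhds hr0)).and
      (Filter.eventually_ge_atTop N)).exists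
    replace hnr : s (φ n) < r := hnr
    have hrR : f r ∉ connectedComponentIn (U \ {f (s (φ n))}) (f 0) := by
      intro hrR
      refine hsep (φ n) (subset_connectedComponentIn_of_mem
        (isPreconnected_Icc.image f (hfc.mono (Icc_subset_Icc hr.1 hδ.2))) ?_
        ⟨r, ⟨le_rfl, hr.2.trans (hsδ _).2.le⟩, rfl⟩ hrR ⟨δ, ⟨hr.2.trans (hsδ _).2.le, le_rfl⟩, rfl⟩)
      rintro _ ⟨a, ha, rfl⟩
      refine ⟨hfU ⟨a, ⟨hr.1.trans ha.1, ha.2⟩, rfl⟩, fun h => ?_⟩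
      have := hfi ⟨hr.1.trans ha.1, ha.2.trans hδ.2⟩ (hs1 _) h
      linarith [ha.1]
    obtain ⟨E₁, E₂, hE₁, hE₂, hEu, hEi⟩ := hE.split hrE
      (fun h => hrR (h ▸ hWR n hnN htW)) hne
    have hmem : ∀ F : Set X, IsPreconnected F → F ⊆ E → f r ∈ F →
        ∀ a ∈ F, a ∈ connectedComponentIn (U \ {f (s (φ n))}) (f 0) → f (s (φ n)) ∈ F := by
      intro F hF hFE hrF a haF haR
      by_contra hn
      refine hrR (subset_connectedComponentIn_of_mem hF ?_ haF haR hrF)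
      exact fun b hb => ⟨(hEU (hFE hb)).1, fun he => hn (he ▸ hb)⟩
    have h₁ := hmem E₁ hE₁.isPreconnected (hEu ▸ subset_union_left) hE₁.right_mem t hE₁.left_mem
      (hWR n hnN htW)
    have h₂ := hmem E₂ hE₂.isPreconnected (hEu ▸ subset_union_right) hE₂.left_mem (f 0)
      hE₂.right_mem (h0R _)
    have h₃ : f (s (φ n)) ∈ E₁ ∩ E₂ := ⟨h₁, h₂⟩
    rw [hEi] at h₃
    exact hnr.ne (hfi (hs1 _) hr1 h₃)
  exact h0 (hT.subset_of_isArc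
    (hE.trans (IsArc.of_param hfc hfi le_rfl (hsδ (φ N)).1 (hs1 _).2) hEf) (hyT _)
    (hfT _ ⟨(hsδ _).1, (hs1 _).2⟩) (Or.inl hE.right_mem))

lemma exists_cyclicallyConnected_near (hT : MaximalCyclic T)
    (hfc : ContinuousOn f (Icc 0 1)) (hfi : InjOn f (Icc 0 1)) (h0 : f 0 ∉ T)
    (hfT : ∀ s ∈ Ioc (0 : ℝ) 1, f s ∈ T) {ε : ℝ} (hε : 0 < ε) :
    ∃ δ ∈ Ioc (0 : ℝ) 1, ∀ a b, 0 < a → a < b → b < δ →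
      ∃ K ⊆ ball (f 0) ε ∩ T, IsCompact K ∧ CyclicallyConnected K ∧ f '' Icc a b ⊆ K := by
  obtain ⟨η, hη, hηε⟩ := Metric.continuousOn_iff.1 hfc 0 ⟨le_rfl, zero_le_one⟩ ε hε
  set δ := min (η / 2) 1 with hδ
  have hδ0 : δ ∈ Ioc (0 : ℝ) 1 := ⟨lt_min (half_pos hη) one_pos, min_le_right _ _⟩
  have hδη : δ < η := (min_le_left _ _).trans_lt (half_lt_self hη)
  have hfU : f '' Icc 0 δ ⊆ ball (f 0) ε := by
    rintro _ ⟨t, ht, rfl⟩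
    refine hηε t ⟨ht.1, ht.2.trans hδ0.2⟩ ?_
    rw [Real.dist_eq, sub_zero, abs_of_nonneg ht.1]
    exact ht.2.trans_lt hδη
  obtain ⟨δ₁, hδ₁, hcomp⟩ := hT.exists_forall_mem_connectedComponentIn hfc hfi h0 hfT isOpen_ball
    hδ0 hfU
  refine ⟨δ₁, ⟨hδ₁.1, hδ₁.2.trans hδ0.2⟩, fun a b ha hab hb => ?_⟩
  let P : ℝ → ℝ → Prop := fun a b => ∃ K ⊆ ball (f 0) ε ∩ T, IsCompact K ∧ CyclicallyConnected K ∧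
    f '' uIcc a b ⊆ K ∧ (∀ᶠ t in nhds a, f t ∈ K) ∧ ∀ᶠ t in nhds b, f t ∈ K
  have hP : P a b := by
    refine isPreconnected_Ioo.induction₂' (s := Ioo 0 δ₁) P (fun s hs => ?_) ?_
      ⟨ha, hab.trans hb⟩ ⟨ha.trans hab, hb⟩
    · obtain ⟨u, v, hu, hus, hsv, hvδ, J, hJ, hJc, hJuv⟩ :=
        hT.exists_isJordanCurve_of_mem_connectedComponentIn hfc hfi h0 hfT isOpen_ball hδ0.2 hfU
          ⟨hs.1, hs.2.trans_le hδ₁.2⟩ (hcomp s hs)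
      have hloc : ∀ r ∈ Ioo u v, ∀ t ∈ Ioo u v, P r t := by
        intro r hr t ht
        refine ⟨J, hJ, hJc.isCompact, fun x hx y hy => ⟨J, subset_rfl, hJc, hx, hy⟩,
          (image_mono (uIcc_subset_Icc ⟨hr.1.le, hr.2.le⟩ ⟨ht.1.le, ht.2.le⟩)).trans hJuv, ?_, ?_⟩
        · filter_upwards [Icc_mem_nhds hr.1 hr.2] with x hx using hJuv ⟨x, hx, rfl⟩
        · filter_upwards [Icc_mem_nhds ht.1 ht.2] with x hx using hJuv ⟨x, hx, rfl⟩
      filter_upwards [mem_nhdsWithin_of_mem_nhds (Ioo_mem_nhds hus hsv)] with t ht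
      exact ⟨hloc s ⟨hus, hsv⟩ t ht, hloc t ht s ⟨hus, hsv⟩⟩
    · rintro r s t - hs - ⟨K, hK, hKc, hKy, hrs, hr, hs₁⟩ ⟨L, hL, hLc, hLy, hst, hs₂, ht⟩
      refine ⟨K ∪ L, union_subset hK hL, hKc.union hLc, hKy.union hLy ?_, ?_,
        hr.mono fun _ => Or.inl, ht.mono fun _ => Or.inr⟩
      · obtain ⟨x, ⟨⟨hxK, hxL⟩, hx⟩, hxs⟩ := (((hs₁.and hs₂).and
          (Ioo_mem_nhds hs.1 hs.2)).filter_mono nhdsWithin_le_nhds |>.and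
          (self_mem_nhdsWithin (a := s) (s := {s}ᶜ))).exists
        refine ⟨f x, ⟨hxK, hxL⟩, f s, ⟨hs₁.self_of_nhds, hs₂.self_of_nhds⟩, fun h => hxs ?_⟩
        have h1 : δ₁ ≤ 1 := hδ₁.2.trans hδ0.2
        exact hfi ⟨hx.1.le, hx.2.le.trans h1⟩ ⟨hs.1.le, hs.2.le.trans h1⟩ h
      · exact (image_mono uIcc_subset_uIcc_union_uIcc).trans
          ((image_union _ _ _).subset.trans (union_subset_union hrs hst))
  obtain ⟨K, hK, hKc, hKy, hab', -⟩ := hP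
  rw [uIcc_of_le hab.le] at hab'
  exact ⟨K, hK, hKc, hKy, hab'⟩

end MaximalCyclic

namespace MaximalCyclic

variable {X : Type} [MetricSpace X] [CompactSpace X] [LocallyConnectedSpace X] {T : Set X}

lemma exists_cyclicallyConnected_chain (hT : MaximalCyclic T) {f : ℝ → X}
    (hfc : ContinuousOn f (Icc 0 1)) (hfi : InjOn f (Icc 0 1)) (h0 : f 0 ∉ T)
    (hfT : ∀ s ∈ Ioc (0 : ℝ) 1, f s ∈ T) :
    ∃ K : ℕ → Set X, (∀ n, IsCompact (K n)) ∧ (∀ n, CyclicallyConnected (K n)) ∧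
      (∀ n, (K n ∩ K (n + 1)).Nontrivial) ∧ (∀ n m, n + 2 ≤ m → Disjoint (K n) (K m)) ∧
      ∀ n, K n ⊆ closedBall (f 0) ((1 / 2) ^ n) ∩ T := by
  have hnear := fun ε (hε : 0 < ε) => hT.exists_cyclicallyConnected_near hfc hfi h0 hfT hε
  choose! δ hδ L hLsub hLc hLy hL using hnear
  -- A state consists of the current radius, the upper parameter, and the next radius.
  let lower : ℝ × ℝ × ℝ → ℝ := fun σ => min σ.2.1 (δ σ.2.2) / 2
  let piece : ℝ × ℝ × ℝ → Set X := fun σ => L σ.1 (lower σ) σ.2.1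
  let next : ℝ × ℝ × ℝ → ℝ × ℝ × ℝ := fun σ =>
    (σ.2.2, 3 / 4 * min σ.2.1 (δ σ.2.2), min (infDist (f 0) (piece σ)) σ.2.2 / 2)
  let σ : ℕ → ℝ × ℝ × ℝ := fun n => next^[n] (1, δ 1 / 2, 1 / 2)
  have hσ : ∀ n, σ (n + 1) = next (σ n) := fun n => Function.iterate_succ_apply' _ _ _
  let good : ℝ × ℝ × ℝ → Prop := fun σ =>
    0 < σ.1 ∧ 0 < σ.2.1 ∧ σ.2.1 < δ σ.1 ∧ 0 < σ.2.2 ∧ σ.2.2 ≤ σ.1 / 2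
  have hlow : ∀ σ, good σ → 0 < lower σ ∧ lower σ < σ.2.1 := by
    rintro σ ⟨h₁, h₂, h₃, h₄, h₅⟩
    have hm : 0 < min σ.2.1 (δ σ.2.2) := lt_min h₂ (hδ _ h₄).1
    exact ⟨half_pos hm, (half_lt_self hm).trans_le (min_le_left _ _)⟩
  have hsub : ∀ σ, good σ → piece σ ⊆ ball (f 0) σ.1 ∩ T := fun σ h =>
    hLsub _ h.1 _ _ (hlow σ h).1 (hlow σ h).2 h.2.2.1
  have hcomp : ∀ σ, good σ → IsCompact (piece σ) := fun σ h =>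
    hLc _ h.1 _ _ (hlow σ h).1 (hlow σ h).2 h.2.2.1
  have hcyc : ∀ σ, good σ → CyclicallyConnected (piece σ) := fun σ h =>
    hLy _ h.1 _ _ (hlow σ h).1 (hlow σ h).2 h.2.2.1
  have hcov : ∀ σ, good σ → f '' Icc (lower σ) σ.2.1 ⊆ piece σ := fun σ h =>
    hL _ h.1 _ _ (hlow σ h).1 (hlow σ h).2 h.2.2.1
  have hpos : ∀ σ, good σ → 0 < infDist (f 0) (piece σ) := fun σ h =>
    ((hcomp σ h).isClosed.notMem_iff_infDist_pos
      ⟨_, hcov σ h ⟨σ.2.1, ⟨(hlow σ h).2.le, le_rfl⟩, rfl⟩⟩).1 fun h' => h0 (hsub σ h h').2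
  have hnext : ∀ σ, good σ → good (next σ) := by
    intro σ h
    obtain ⟨h₁, h₂, h₃, h₄, h₅⟩ := h
    have hm : 0 < min σ.2.1 (δ σ.2.2) := lt_min h₂ (hδ _ h₄).1
    refine ⟨h₄, by positivity, ?_, half_pos (lt_min (hpos σ ⟨h₁, h₂, h₃, h₄, h₅⟩) h₄),
      by dsimp only [next]; linarith [min_le_right (infDist (f 0) (piece σ)) σ.2.2]⟩
    dsimp only [next]
    linarith [min_le_right σ.2.1 (δ σ.2.2)]
  have hgood : ∀ n, good (σ n) := by
    intro n
    induction n with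
    | zero =>
      have := (hδ 1 one_pos).1
      exact ⟨one_pos, half_pos this, half_lt_self this, by norm_num [σ], by norm_num [σ]⟩
    | succ n ih => rw [hσ]; exact hnext _ ih
  have hhalf : ∀ n, (σ (n + 1)).1 ≤ (σ n).1 / 2 := fun n => by rw [hσ]; exact (hgood n).2.2.2.2
  have hpow : ∀ n, (σ n).1 ≤ (1 / 2) ^ n := by
    intro n
    induction n with
    | zero => simp [σ]
    | succ n ih =>
      rw [pow_succ]
      linarith [hhalf n]
  have hanti : Antitone fun n => (σ n).1 :=
    antitone_nat_of_succ_le fun n => (hhalf n).trans (half_le_self (hgood n).1.le)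
  refine ⟨fun n => piece (σ n), fun n => hcomp _ (hgood n), fun n => hcyc _ (hgood n), ?_, ?_,
    fun n => (hsub _ (hgood n)).trans (inter_subset_inter_left _
      (ball_subset_closedBall.trans (closedBall_subset_closedBall (hpow n))))⟩
  · intro n
    have hg := hgood n
    have hg' := hgood (n + 1)
    have hm : 0 < min (σ n).2.1 (δ (σ n).2.2) := lt_min hg.2.1 (hδ _ hg.2.2.2.1).1
    have hb : (σ (n + 1)).2.1 = 3 / 4 * min (σ n).2.1 (δ (σ n).2.2) := by rw [hσ]
    have hl : lower (σ n) = min (σ n).2.1 (δ (σ n).2.2) / 2 := rfl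
    have hle := min_le_left (σ n).2.1 (δ (σ n).2.2)
    have hlb : lower (σ n) < (σ (n + 1)).2.1 := by rw [hl, hb]; linarith
    have hbb : (σ (n + 1)).2.1 ≤ (σ n).2.1 := by rw [hb]; linarith
    set c := max (lower (σ n)) (lower (σ (n + 1))) with hc
    have hcb : c < (σ (n + 1)).2.1 := max_lt hlb (hlow _ hg').2
    have hc0 : 0 < c := (hlow _ hg).1.trans_le (le_max_left _ _)
    have hb1 : (σ (n + 1)).2.1 ≤ 1 := hg'.2.2.1.le.trans (hδ _ hg'.1).2
    refine ⟨f c, ⟨hcov _ hg ⟨c, ⟨le_max_left _ _, hcb.le.trans hbb⟩, rfl⟩,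
      hcov _ hg' ⟨c, ⟨le_max_right _ _, hcb.le⟩, rfl⟩⟩, f (σ (n + 1)).2.1,
      ⟨hcov _ hg ⟨_, ⟨hlb.le, hbb⟩, rfl⟩, hcov _ hg' ⟨_, ⟨(hlow _ hg').2.le, le_rfl⟩, rfl⟩⟩, ?_⟩
    exact fun h => hcb.ne (hfi ⟨hc0.le, hcb.le.trans hb1⟩ ⟨hg'.2.1.le, hb1⟩ h)
  · intro n m hnm
    refine disjoint_left.2 fun y hyn hym => ?_
    have h₁ := mem_ball.1 (hsub _ (hgood m) hym).1
    have h₂ : (σ m).1 ≤ (σ (n + 2)).1 := hanti hnm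
    have h₃ : (σ (n + 2)).1 ≤ infDist (f 0) (piece (σ n)) / 2 := by
      have : (σ (n + 2)).1 = min (infDist (f 0) (piece (σ n))) (σ n).2.2 / 2 := by rw [hσ, hσ]
      linarith [min_le_left (infDist (f 0) (piece (σ n))) (σ n).2.2]
    have h₄ : infDist (f 0) (piece (σ n)) ≤ dist (f 0) y := infDist_le_dist_of_mem hyn
    rw [dist_comm] at h₄
    linarith [hpos _ (hgood n)]

lemma isClosed (hT : MaximalCyclic T) : IsClosed T := by
  refine isClosed_of_closure_subset fun x hx => ?_
  by_contra hxT
  obtain ⟨U, -, hUo, hxU, hUc⟩ := exists_isOpen_isConnected_subset (x := x) Filter.univ_mem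
  obtain ⟨t, htU, htT⟩ := mem_closure_iff.1 hx U hUo hxU
  obtain ⟨A, -, hA⟩ := hUo.exists_isArc hUc.isPreconnected hxU htU fun h => hxT (h ▸ htT)
  obtain ⟨f, hfc, hfi, rfl, rfl, -⟩ := hA.exists_param zero_lt_one
  obtain ⟨K, hKc, hKy, hKK, hdisj, hK⟩ := hT.exists_cyclicallyConnected_chain hfc hfi hxT
    fun s hs => hT.mem_of_mem_closure_of_arc hfc hfi hx htT hs
  obtain ⟨p, hp, q, hq, hpq⟩ := hKK 0
  have hd := disjoint_left.1 (hdisj 0 2 le_rfl)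
  obtain ⟨α, hα, hxα⟩ := exists_isArc_of_cyclicallyConnected_chain (K := fun n => K (n + 1))
    (fun n => hKc _) (fun n => hKy _) (fun n => hKK _) (fun n m h => hdisj _ _ (by omega))
    (fun n => (hK (n + 1)).trans (inter_subset_left.trans (closedBall_subset_closedBall
      (pow_le_pow_of_le_one (by norm_num) (by norm_num) n.le_succ))))
    (fun h => hxT (hK 1 h).2) hp.2 hq.2 (hd hp.1) (hd hq.1) hpq
  exact hxT (hT.subset_of_isArc hα (hK 0 hp.1).2 (hK 0 hq.1).2 hxα)

end MaximalCyclic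

/-- If `T` is a maximal cyclic subset of a Peano space `X` and `C` a connected
component of `X \ T`, then the boundary of `C` is a single point lying in `T`. -/
theorem frontier_connectedComponentIn_compl_maximalCyclic
    (X : Type) [MetricSpace X] [CompactSpace X] [ConnectedSpace X] [LocallyConnectedSpace X]
    (T : Set X) (hT : MaximalCyclic T) (C : Set X)
    (hC : ∃ x ∈ Tᶜ, C = connectedComponentIn Tᶜ x) :
    ∃ p ∈ T, frontier C = {p} := by
  obtain ⟨x, hx, rfl⟩ := hC
  set C := connectedComponentIn Tᶜ x with hCdef
  have hTo : IsOpen Tᶜ := hT.isClosed.isOpen_compl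
  have hCo : IsOpen C := hTo.connectedComponentIn
  have hCT : C ⊆ Tᶜ := connectedComponentIn_subset _ _
  have hCc : IsPreconnected C := isPreconnected_connectedComponentIn
  have hfT : frontier C ⊆ T := by
    rintro p ⟨hpC, hpi⟩
    by_contra hpT
    obtain ⟨W, hWT, hWo, hpW, hWc⟩ := exists_isOpen_isConnected_subset (hTo.mem_nhds hpT)
    obtain ⟨y, hyW, hyC⟩ := mem_closure_iff.1 hpC W hWo hpW
    rw [hCo.interior_eq] at hpi
    exact hpi (subset_connectedComponentIn_of_mem hWc.isPreconnected hWT hyW hyC hpW)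
  have hne : (frontier C).Nonempty := by
    rw [nonempty_iff_ne_empty]
    intro h
    rcases isClopen_iff.1 (isClopen_iff_frontier_eq_empty.2 h) with h | h
    · exact absurd (h ▸ mem_connectedComponentIn hx : x ∈ (∅ : Set X)) (notMem_empty x)
    · obtain ⟨a, ha, -⟩ := not_subsingleton_iff.1 hT.1
      exact hCT (h ▸ mem_univ a) ha
  obtain ⟨p, hp⟩ := hne
  refine ⟨p, hfT hp, Subset.antisymm (fun q hq => ?_) (singleton_subset_iff.2 hp)⟩
  by_contra hqp
  obtain ⟨Up, Uq, hUp, hUq, hpU, hqU, hU⟩ := t2_separation (Ne.symm hqp)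
  obtain ⟨Np, hNp, hNpo, hpN, hNpc⟩ := exists_isOpen_isConnected_subset (hUp.mem_nhds hpU)
  obtain ⟨Nq, hNq, hNqo, hqN, hNqc⟩ := exists_isOpen_isConnected_subset (hUq.mem_nhds hqU)
  obtain ⟨a, haN, haC⟩ := mem_closure_iff.1 hp.1 Np hNpo hpN
  obtain ⟨b, hbN, hbC⟩ := mem_closure_iff.1 hq.1 Nq hNqo hqN
  have hconn : IsPreconnected (Np ∪ C ∪ Nq) :=
    (hNpc.isPreconnected.union a haN haC hCc).union b (Or.inr hbC) hbN hNqc.isPreconnected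
  obtain ⟨α, hα, hαarc⟩ := ((hNpo.union hCo).union hNqo).exists_isArc hconn
    (Or.inl (Or.inl hpN)) (Or.inr hqN) (Ne.symm hqp)
  have hαT := hT.subset_of_isArc hαarc (hfT hp) (hfT hq)
  have hαN : α ⊆ Np ∪ Nq := by
    intro y hy
    rcases hα hy with (h | h) | h
    · exact Or.inl h
    · exact absurd (hαT hy) (hCT h)
    · exact Or.inr h
  obtain ⟨y, -, hyp, hyq⟩ := hαarc.isPreconnected Np Nq hNpo hNqo hαN
    ⟨p, hαarc.left_mem, hpN⟩ ⟨q, hαarc.right_mem, hqN⟩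
  exact disjoint_left.1 hU (hNp hyp) (hNq hyq)
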